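/- Let g be an integer with |g| > 1 which is not a perfect square, and write g = g₀^h with g₀ ∈ ℤ and h ∈ ℕ maximal, and assume h > 1. Let d be the discriminant of ℚ(√g) (i.e. d = g₁ if the squarefree kernel g₁ of g satisfies g₁ ≡ 1 (mod 4), and d = 4g₁ otherwise). Fix an integer k ≥ 0. Then, with the summation ∑' running over those primes p among the first N primes for which the Legendre symbol (g/p) = −1 and gcd(p − 1, h) = 1, the limit as N → ∞ of (∑' p^k φ(p − 1)) / (∑' p^k (p − 1)) exists and equals Ã(g) = Ã_h · Ã_d, where Ã_h = ∏_{p prime, p ∤ h} (1 − 1/(p(p−1))), and Ã_d = 1 if d | h, while otherwise Ã_d = 1 − μ(|d|) · ∏_{q prime, q | d, q | h} 1/(q − 2) · ∏_{q prime, q | d, q ∤ h} 1/(q² − q − 1). -/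

import Mathlib

open Filter

/-! Both sums are averages over the primes `p` with `(g/p) = -1` of a product
`∏_{l ∣ p - 1} (1 - c l)`: with `c l = 1` for `l ∣ h`, which expresses `gcd(p - 1, h) = 1`, and
`c l = 1/l` (numerator) or `c l = 0` (denominator) for the other primes `l`. Truncate the product to
`l ≤ Y` and expand it together with `(1 - (g/p)) / 2`. This leaves sums of `1` and of `(g/p)` over
the primes `p ≡ 1 (mod n)`, `n` squarefree. By the prime number theorem in arithmetic progressions
(obtained here from a Wiener–Ikehara theorem), the first have density `1/φ(n)`; by quadratic
reciprocity, the second have density `1/φ(n)` if `d ∣ n` and `0` otherwise, which produces the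
factor `Ã_d`. By Brun–Titchmarsh the error of the truncation is `O(∑_{l > Y} log l / l²)` on
average, so that one may let `Y → ∞`; the weight `p^k` is introduced by Abel summation. -/

namespace ArtinRatio

section Kernel

open MeasureTheory

variable {a b σ y M : ℝ} {s : ℂ} {D φ K : ℝ → ℂ} {G : ℂ → ℂ}

lemma tendsto_intervalIntegral_mul_exp_atTop (f : ℝ → ℂ) (hab : a ≤ b) :
    Tendsto (fun y : ℝ => ∫ t in a..b, f t * Complex.exp (Complex.I * t * y)) atTop (nhds 0) := by
  have hscale : Tendsto (fun y : ℝ => -(2 * Real.pi)⁻¹ * y) atTop (cocompact ℝ) :=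
    (tendsto_id.const_mul_atTop_of_neg (by simp [Real.pi_pos])).mono_right atBot_le_cocompact
  refine ((Real.tendsto_integral_exp_smul_cocompact
    (Set.indicator (Set.Ioc a b) f)).comp hscale).congr fun y => ?_
  rw [intervalIntegral.integral_of_le hab, ← integral_indicator measurableSet_Ioc]
  refine integral_congr_ae (Eventually.of_forall fun t => ?_)
  by_cases ht : t ∈ Set.Ioc a b
  · simp only [Set.indicator_of_mem ht]
    rw [Circle.smul_def, Real.fourierChar_apply, smul_eq_mul, mul_comm]
    congr 2
    have hpi : (Real.pi : ℂ) ≠ 0 := by exact_mod_cast Real.pi_ne_zero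
    push_cast
    field_simp
  · simp only [Set.indicator_of_notMem ht, smul_zero]

lemma norm_exp_I_mul_mul (t v : ℝ) : ‖Complex.exp (Complex.I * t * v)‖ = 1 := by
  rw [Complex.norm_exp]
  simp

lemma integrableOn_mul_exp_neg_of_norm_le (hD : Measurable D) (hM : ∀ u, ‖D u‖ ≤ M)
    (hs : 0 < s.re) :
    IntegrableOn (fun u : ℝ => D u * Complex.exp (-(s * u))) (Set.Ioi 0) := by
  have hexp : IntegrableOn (fun u : ℝ => Complex.exp (-(s * u))) (Set.Ioi 0) := by
    simpa only [neg_mul] using integrableOn_exp_mul_complex_Ioi (a := -s) (by simpa using hs) 0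
  exact hexp.bdd_mul hD.aestronglyMeasurable (Eventually.of_forall hM)

/-- The identity behind the Wiener–Ikehara method, on a vertical line strictly to the right of the
boundary: both sides are the double integral of `D u e^{-σ u} φ t e^{i t (y - u)}`. -/
lemma intervalIntegral_laplace_mul_exp (hD : Measurable D) (hM : ∀ u, ‖D u‖ ≤ M) (hσ : 0 < σ)
    (hG : ∀ t : ℝ, ∫ u in Set.Ioi (0 : ℝ), D u * Complex.exp (-((σ + Complex.I * t) * u)) =
      G (σ + Complex.I * t))
    (hab : a ≤ b) (hφ : Continuous φ)
    (hK : ∀ v : ℝ, ∫ t in a..b, φ t * Complex.exp (Complex.I * t * v) = K v) (y : ℝ) :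
    ∫ t in a..b, φ t * G (σ + Complex.I * t) * Complex.exp (Complex.I * t * y) =
      ∫ u in Set.Ioi (0 : ℝ), D u * Complex.exp (-(σ * u)) * K (y - u) := by
  have hprod : Integrable (fun z : ℝ × ℝ => Complex.exp (Complex.I * z.1 * (y - z.2 : ℝ)) *
      (φ z.1 * (D z.2 * Complex.exp (-(σ * z.2)))))
      ((volume.restrict (Set.Ioc a b)).prod (volume.restrict (Set.Ioi 0))) :=
    ((hφ.integrableOn_Ioc).mul_prod
      (integrableOn_mul_exp_neg_of_norm_le hD hM (s := σ) (by simpa using hσ))).bdd_mul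
      (by fun_prop) (Eventually.of_forall fun z => (norm_exp_I_mul_mul _ _).le)
  calc ∫ t in a..b, φ t * G (σ + Complex.I * t) * Complex.exp (Complex.I * t * y)
      = ∫ t in a..b, ∫ u in Set.Ioi (0 : ℝ), Complex.exp (Complex.I * t * (y - u : ℝ)) *
          (φ t * (D u * Complex.exp (-(σ * u)))) := by
        refine intervalIntegral.integral_congr fun t _ => ?_
        rw [← hG, mul_right_comm, ← integral_const_mul]
        refine integral_congr_ae (Eventually.of_forall fun u => ?_)
        simp only
        rw [show -((σ + Complex.I * t) * u) = -(σ * u) + -(Complex.I * t * u) by ring,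
          show Complex.I * t * (y - u : ℝ) = Complex.I * t * y + -(Complex.I * t * u) by
            push_cast; ring, Complex.exp_add, Complex.exp_add]
        ring
    _ = ∫ u in Set.Ioi (0 : ℝ), ∫ t in a..b, Complex.exp (Complex.I * t * (y - u : ℝ)) *
          (φ t * (D u * Complex.exp (-(σ * u)))) := by
        simp only [intervalIntegral.integral_of_le hab]
        exact integral_integral_swap hprod
    _ = ∫ u in Set.Ioi (0 : ℝ), D u * Complex.exp (-(σ * u)) * K (y - u) := by
        refine integral_congr_ae (Eventually.of_forall fun u => ?_)
        simp only
        rw [← hK, ← intervalIntegral.integral_const_mul]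
        exact intervalIntegral.integral_congr fun t _ => by ring

lemma tendsto_intervalIntegral_vertical (hφ : Continuous φ) (hG : ContinuousOn G {s | 0 ≤ s.re})
    (a b y : ℝ) :
    Tendsto (fun σ : ℝ => ∫ t in a..b,
        φ t * G (σ + Complex.I * t) * Complex.exp (Complex.I * t * y)) (nhdsWithin 0 (Set.Ioi 0))
      (nhds (∫ t in a..b, φ t * G (Complex.I * t) * Complex.exp (Complex.I * t * y))) := by
  -- Replacing `σ` by `max σ 0` extends the integrand continuously to all `σ`.
  have hGmax : Continuous fun z : ℝ × ℝ => G ((max z.1 0 : ℝ) + Complex.I * z.2) :=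
    hG.comp_continuous (by fun_prop) fun z => by simp
  have hcont : Continuous fun σ : ℝ => ∫ t in a..b,
      φ t * G ((max σ 0 : ℝ) + Complex.I * t) * Complex.exp (Complex.I * t * y) := by
    apply intervalIntegral.continuous_parametric_intervalIntegral_of_continuous'
    exact ((hφ.comp continuous_snd).mul hGmax).mul (by fun_prop)
  have hlim := (hcont.tendsto 0).mono_left (nhdsWithin_le_nhds (s := Set.Ioi 0))
  simp only [max_self, Complex.ofReal_zero, zero_add] at hlim
  refine hlim.congr' ?_
  filter_upwards [self_mem_nhdsWithin] with σ (hσ : 0 < σ)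
  rw [max_eq_left hσ.le]

lemma tendsto_integral_mul_exp_neg_mul (hD : Measurable D) (hM : ∀ u, ‖D u‖ ≤ M)
    (hK : Integrable K) (y : ℝ) :
    Tendsto (fun σ : ℝ => ∫ u in Set.Ioi (0 : ℝ), D u * Complex.exp (-(σ * u)) * K (y - u))
      (nhdsWithin 0 (Set.Ioi 0)) (nhds (∫ u in Set.Ioi (0 : ℝ), D u * K (y - u))) := by
  have hKy : Integrable fun u => K (y - u) := hK.comp_sub_left y
  refine tendsto_integral_filter_of_dominated_convergence (fun u => M * ‖K (y - u)‖) ?_ ?_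
    (hKy.norm.const_mul M).integrableOn ?_
  · exact Eventually.of_forall fun σ =>
      ((by fun_prop : Measurable fun u : ℝ => D u * Complex.exp (-(σ * u))).aestronglyMeasurable.mul
        hKy.aestronglyMeasurable.restrict)
  · filter_upwards [self_mem_nhdsWithin] with σ (hσ : 0 < σ)
    refine (ae_restrict_iff' measurableSet_Ioi).2 (Eventually.of_forall fun u (hu : 0 < u) => ?_)
    have hexp : ‖Complex.exp (-(σ * u))‖ ≤ 1 := by
      rw [Complex.norm_exp, Real.exp_le_one_iff]
      simpa using (mul_pos hσ hu).le
    rw [norm_mul, norm_mul]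
    calc ‖D u‖ * ‖Complex.exp (-(σ * u))‖ * ‖K (y - u)‖ ≤ M * 1 * ‖K (y - u)‖ := by
          gcongr
          · exact (norm_nonneg _).trans (hM u)
          · exact hM u
      _ = M * ‖K (y - u)‖ := by rw [mul_one]
  · refine Eventually.of_forall fun u => Tendsto.mul_const _ ?_
    have hcont : Continuous fun σ : ℝ => D u * Complex.exp (-(σ * u)) := by fun_prop
    simpa using (hcont.tendsto 0).mono_left nhdsWithin_le_nhds

lemma intervalIntegral_laplace_mul_exp_boundary (hD : Measurable D) (hM : ∀ u, ‖D u‖ ≤ M)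
    (hG : ContinuousOn G {s | 0 ≤ s.re})
    (hDG : ∀ s : ℂ, 0 < s.re → ∫ u in Set.Ioi (0 : ℝ), D u * Complex.exp (-(s * u)) = G s)
    (hab : a ≤ b) (hφ : Continuous φ) (hK : Integrable K)
    (hφK : ∀ v : ℝ, ∫ t in a..b, φ t * Complex.exp (Complex.I * t * v) = K v) (y : ℝ) :
    ∫ t in a..b, φ t * G (Complex.I * t) * Complex.exp (Complex.I * t * y) =
      ∫ u in Set.Ioi (0 : ℝ), D u * K (y - u) := by
  refine tendsto_nhds_unique ((tendsto_intervalIntegral_vertical hφ hG a b y).congr' ?_)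
    (tendsto_integral_mul_exp_neg_mul hD hM hK y)
  filter_upwards [self_mem_nhdsWithin] with σ (hσ : 0 < σ)
  exact intervalIntegral_laplace_mul_exp hD hM hσ
    (fun t => hDG _ (by simpa using hσ)) hab hφ hφK y

theorem tendsto_integral_mul_kernel_of_laplace (hD : Measurable D) (hM : ∀ u, ‖D u‖ ≤ M)
    (hG : ContinuousOn G {s | 0 ≤ s.re})
    (hDG : ∀ s : ℂ, 0 < s.re → ∫ u in Set.Ioi (0 : ℝ), D u * Complex.exp (-(s * u)) = G s)
    (hab : a ≤ b) (hφ : Continuous φ) (hK : Integrable K)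
    (hφK : ∀ v : ℝ, ∫ t in a..b, φ t * Complex.exp (Complex.I * t * v) = K v) :
    Tendsto (fun y => ∫ u in Set.Ioi (0 : ℝ), D u * K (y - u)) atTop (nhds 0) :=
  (tendsto_intervalIntegral_mul_exp_atTop (fun t => φ t * G (Complex.I * t)) hab).congr
    (intervalIntegral_laplace_mul_exp_boundary hD hM hG hDG hab hφ hK hφK)

end Kernel

section Fejer

open MeasureTheory

/-- The Fejér kernel on `ℝ`, in the normalisation `(sin (v/2) / (v/2))²`, whose Fourier transform
is supported on `[-1, 1]`. -/
noncomputable def fejer (v : ℝ) : ℝ := Real.sinc (v / 2) ^ 2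

lemma fejer_nonneg (v : ℝ) : 0 ≤ fejer v := sq_nonneg _

lemma continuous_fejer : Continuous fejer :=
  (Real.continuous_sinc.comp (continuous_id.div_const 2)).pow 2

lemma fejer_le (v : ℝ) : fejer v ≤ 5 * (1 + v ^ 2)⁻¹ := by
  have hone : Real.sinc (v / 2) ^ 2 ≤ 1 := by
    rw [sq_le_one_iff_abs_le_one]
    exact Real.abs_sinc_le_one _
  have hfour : Real.sinc (v / 2) ^ 2 * v ^ 2 ≤ 4 := by
    rcases eq_or_ne v 0 with rfl | hv
    · simp
    · rw [Real.sinc_of_ne_zero (by simpa using hv)]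
      have := Real.sin_sq_le_one (v / 2)
      field_simp
      nlinarith
  rw [fejer, ← div_eq_mul_inv, le_div_iff₀ (by positivity)]
  linarith

lemma integrable_fejer : Integrable fejer := by
  refine Integrable.mono' (integrable_inv_one_add_sq.const_mul 5)
    continuous_fejer.aestronglyMeasurable (Eventually.of_forall fun v => ?_)
  rw [Real.norm_of_nonneg (fejer_nonneg v)]
  exact fejer_le v

lemma integral_fejer_pos : 0 < ∫ v, fejer v := by
  rw [integral_pos_iff_support_of_nonneg fejer_nonneg integrable_fejer]
  exact continuous_fejer.isOpen_support.measure_pos _ ⟨0, by simp [fejer]⟩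

lemma integral_one_sub_mul_cos (v : ℝ) :
    ∫ t in (0 : ℝ)..1, 2 * (1 - t) * Real.cos (t * v) = fejer v := by
  rcases eq_or_ne v 0 with rfl | hv
  · have hderiv : ∀ t ∈ Set.uIcc (0 : ℝ) 1,
        HasDerivAt (fun t : ℝ => 2 * t - t ^ 2) (2 * (1 - t) * Real.cos (t * 0)) t := fun t _ =>
      (((hasDerivAt_id t).const_mul 2).sub ((hasDerivAt_id t).pow 2)).congr_deriv (by simp; ring)
    rw [intervalIntegral.integral_eq_sub_of_hasDerivAt hderiv
      (Continuous.intervalIntegrable (by fun_prop) _ _)]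
    norm_num [fejer]
  · have hderiv : ∀ t ∈ Set.uIcc (0 : ℝ) 1, HasDerivAt
        (fun t : ℝ => 2 * (1 - t) * Real.sin (t * v) / v - 2 * Real.cos (t * v) / v ^ 2)
        (2 * (1 - t) * Real.cos (t * v)) t := by
      intro t _
      have harg : HasDerivAt (fun t : ℝ => t * v) v t := by
        simpa using (hasDerivAt_id t).mul_const v
      have hlin : HasDerivAt (fun t : ℝ => 2 * (1 - t)) (-2) t := by
        simpa using ((hasDerivAt_id t).const_sub 1).const_mul 2
      refine (((hlin.mul harg.sin).div_const v).sub
        ((harg.cos.const_mul 2).div_const (v ^ 2))).congr_deriv ?_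
      field_simp
      ring
    have hcos : Real.cos v = 1 - 2 * Real.sin (v / 2) ^ 2 := by
      have hdouble := Real.cos_two_mul (v / 2)
      rw [Real.cos_sq', mul_div_cancel₀ v two_ne_zero] at hdouble
      linarith
    rw [intervalIntegral.integral_eq_sub_of_hasDerivAt hderiv
      (Continuous.intervalIntegrable (by fun_prop) _ _), fejer,
      Real.sinc_of_ne_zero (by simpa using hv)]
    simp only [sub_self, mul_zero, one_mul, zero_mul, Real.sin_zero, Real.cos_zero, hcos]
    field_simp
    ring

lemma integral_tent_mul_exp (v : ℝ) :
    ∫ t in (-1 : ℝ)..1, ((1 - |t| : ℝ) : ℂ) * Complex.exp (Complex.I * t * v) = fejer v := by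
  have hpos : Continuous fun t : ℝ => ((1 - |t| : ℝ) : ℂ) * Complex.exp (Complex.I * t * v) := by
    fun_prop
  have hneg : Continuous fun t : ℝ =>
      ((1 - |-t| : ℝ) : ℂ) * Complex.exp (Complex.I * (-t : ℝ) * v) := by fun_prop
  have hflip := intervalIntegral.integral_comp_neg (a := 0) (b := 1)
    (fun t : ℝ => ((1 - |t| : ℝ) : ℂ) * Complex.exp (Complex.I * t * v))
  rw [neg_zero] at hflip
  rw [← intervalIntegral.integral_add_adjacent_intervals (b := 0) (hpos.intervalIntegrable _ _)
    (hpos.intervalIntegrable _ _), ← hflip, ← intervalIntegral.integral_add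
    (hneg.intervalIntegrable _ _) (hpos.intervalIntegrable _ _), ← integral_one_sub_mul_cos,
    ← intervalIntegral.integral_ofReal]
  refine intervalIntegral.integral_congr fun t ht => ?_
  rw [Set.uIcc_of_le zero_le_one] at ht
  simp only [abs_neg, abs_of_nonneg ht.1]
  push_cast
  rw [Complex.cos, show Complex.I * -(t : ℂ) * v = -(t * v) * Complex.I by ring,
    show Complex.I * (t : ℂ) * v = (t * v) * Complex.I by ring]
  ring

end Fejer

section Tauberian

open MeasureTheory

variable {B K : ℝ → ℝ} {M R T A : ℝ}

/-- A probability density on `ℝ` giving mass at least `1 - R` to the interval `[-R, R]`. As `R → 0`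
such densities form an approximate identity; a single parameter measures width and escaping mass. -/
structure IsConcentratedKernel (K : ℝ → ℝ) (R : ℝ) : Prop where
  nonneg : ∀ v, 0 ≤ K v
  integrable : Integrable K
  integral_eq_one : ∫ v, K v = 1
  one_sub_le : 1 - R ≤ ∫ v in -R..R, K v

namespace IsConcentratedKernel

lemma integrable_mul_comp_sub_left (hK : IsConcentratedKernel K R) (hBm : Measurable B)
    (hM : ∀ u, ‖B u‖ ≤ M) (y : ℝ) : Integrable fun u => B u * K (y - u) :=
  (hK.integrable.comp_sub_left y).bdd_mul hBm.aestronglyMeasurable (Eventually.of_forall hM)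

lemma one_sub_le_setIntegral (hK : IsConcentratedKernel K R) (hR : 0 ≤ R) (y : ℝ) :
    1 - R ≤ ∫ u in Set.Ioc (y - R) (y + R), K (y - u) := by
  rw [← intervalIntegral.integral_of_le (by linarith), intervalIntegral.integral_comp_sub_left]
  simpa using hK.one_sub_le

lemma setIntegral_compl_le (hK : IsConcentratedKernel K R) (hR : 0 ≤ R) (y : ℝ) :
    ∫ u in (Set.Ioc (y - R) (y + R))ᶜ, K (y - u) ≤ R := by
  rw [setIntegral_compl measurableSet_Ioc (hK.integrable.comp_sub_left y),
    integral_sub_left_eq_self K volume y, hK.integral_eq_one]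
  linarith [hK.one_sub_le_setIntegral hR y]

lemma one_sub_mul_le_exp_mul_integral (hK : IsConcentratedKernel K R) (hBm : Measurable B)
    (hB0 : ∀ u, 0 ≤ B u) (hM : ∀ u, ‖B u‖ ≤ M)
    (hB : ∀ x y, x ≤ y → B x ≤ Real.exp (y - x) * B y) (hR : 0 ≤ R) (y : ℝ) :
    (1 - R) * B y ≤ Real.exp (2 * R) * ∫ u, B u * K (y + R - u) := by
  have hint := (hK.integrable_mul_comp_sub_left hBm hM (y + R)).const_mul (Real.exp (2 * R))
  have hpoint : ∀ u ∈ Set.Ioc (y + R - R) (y + R + R),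
      B y * K (y + R - u) ≤ Real.exp (2 * R) * (B u * K (y + R - u)) := by
    intro u hu
    have hle : B y ≤ Real.exp (2 * R) * B u := by
      refine (hB y u (by linarith [hu.1])).trans ?_
      gcongr
      · exact hB0 u
      · linarith [hu.2]
    rw [← mul_assoc]
    exact mul_le_mul_of_nonneg_right hle (hK.nonneg _)
  calc (1 - R) * B y
      ≤ B y * ∫ u in Set.Ioc (y + R - R) (y + R + R), K (y + R - u) := by
        rw [mul_comm]
        exact mul_le_mul_of_nonneg_left (hK.one_sub_le_setIntegral hR _) (hB0 y)
    _ = ∫ u in Set.Ioc (y + R - R) (y + R + R), B y * K (y + R - u) := by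
        rw [integral_const_mul]
    _ ≤ ∫ u in Set.Ioc (y + R - R) (y + R + R), Real.exp (2 * R) * (B u * K (y + R - u)) :=
        setIntegral_mono_on ((hK.integrable.comp_sub_left _).const_mul _).integrableOn
          hint.integrableOn measurableSet_Ioc hpoint
    _ ≤ ∫ u, Real.exp (2 * R) * (B u * K (y + R - u)) :=
        setIntegral_le_integral hint (Eventually.of_forall fun u =>
          mul_nonneg (Real.exp_pos _).le (mul_nonneg (hB0 u) (hK.nonneg _)))
    _ = Real.exp (2 * R) * ∫ u, B u * K (y + R - u) := integral_const_mul _ _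

lemma integral_le_exp_mul_add (hK : IsConcentratedKernel K R) (hBm : Measurable B)
    (hB0 : ∀ u, 0 ≤ B u) (hM : ∀ u, ‖B u‖ ≤ M)
    (hB : ∀ x y, x ≤ y → B x ≤ Real.exp (y - x) * B y) (hR : 0 ≤ R) (y : ℝ) :
    ∫ u, B u * K (y - R - u) ≤ Real.exp (2 * R) * B y + M * R := by
  have hint := hK.integrable_mul_comp_sub_left hBm hM (y - R)
  have hKy := hK.integrable.comp_sub_left (y - R)
  have hnear : ∫ u in Set.Ioc (y - R - R) (y - R + R), B u * K (y - R - u) ≤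
      Real.exp (2 * R) * B y := by
    have hpoint : ∀ u ∈ Set.Ioc (y - R - R) (y - R + R),
        B u * K (y - R - u) ≤ Real.exp (2 * R) * B y * K (y - R - u) := by
      intro u hu
      refine mul_le_mul_of_nonneg_right ((hB u y (by linarith [hu.2])).trans ?_) (hK.nonneg _)
      gcongr
      · exact hB0 y
      · linarith [hu.1]
    calc ∫ u in Set.Ioc (y - R - R) (y - R + R), B u * K (y - R - u)
        ≤ ∫ u in Set.Ioc (y - R - R) (y - R + R), Real.exp (2 * R) * B y * K (y - R - u) :=
          setIntegral_mono_on hint.integrableOn (hKy.const_mul _).integrableOn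
            measurableSet_Ioc hpoint
      _ ≤ ∫ u, Real.exp (2 * R) * B y * K (y - R - u) :=
          setIntegral_le_integral (hKy.const_mul _) (Eventually.of_forall fun u =>
            mul_nonneg (mul_nonneg (Real.exp_pos _).le (hB0 y)) (hK.nonneg _))
      _ = Real.exp (2 * R) * B y := by
          rw [integral_const_mul, integral_sub_left_eq_self K volume, hK.integral_eq_one, mul_one]
  have hfar : ∫ u in (Set.Ioc (y - R - R) (y - R + R))ᶜ, B u * K (y - R - u) ≤ M * R :=
    calc ∫ u in (Set.Ioc (y - R - R) (y - R + R))ᶜ, B u * K (y - R - u)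
        ≤ ∫ u in (Set.Ioc (y - R - R) (y - R + R))ᶜ, M * K (y - R - u) :=
          setIntegral_mono_on hint.integrableOn (hKy.const_mul _).integrableOn
            measurableSet_Ioc.compl fun u _ =>
              mul_le_mul_of_nonneg_right ((le_abs_self _).trans (hM u)) (hK.nonneg _)
      _ = M * ∫ u in (Set.Ioc (y - R - R) (y - R + R))ᶜ, K (y - R - u) := integral_const_mul _ _
      _ ≤ M * R := mul_le_mul_of_nonneg_left (hK.setIntegral_compl_le hR _)
          ((norm_nonneg _).trans (hM 0))
  rw [← integral_add_compl measurableSet_Ioc hint]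
  exact add_le_add hnear hfar

end IsConcentratedKernel

lemma measurable_of_monotone_exp_mul (hB : Monotone fun u => Real.exp u * B u) : Measurable B := by
  have heq : B = fun u => Real.exp (-u) * (Real.exp u * B u) := by
    ext u
    rw [← mul_assoc, ← Real.exp_add, neg_add_cancel, Real.exp_zero, one_mul]
  rw [heq]
  exact (by fun_prop : Measurable fun u : ℝ => Real.exp (-u)).mul hB.measurable

lemma le_exp_sub_mul_of_monotone_exp_mul (hB : Monotone fun u => Real.exp u * B u) {x y : ℝ}
    (hxy : x ≤ y) : B x ≤ Real.exp (y - x) * B y := by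
  rw [Real.exp_sub, div_mul_eq_mul_div, le_div_iff₀ (Real.exp_pos _), mul_comm]
  exact hB hxy

theorem tendsto_of_tendsto_integral_concentratedKernel (hB0 : ∀ u, 0 ≤ B u)
    (hM : ∀ u, ‖B u‖ ≤ M) (hB : Monotone fun u => Real.exp u * B u)
    (hK : ∀ R > 0, ∃ K, IsConcentratedKernel K R ∧
      Tendsto (fun y => ∫ u, B u * K (y - u)) atTop (nhds A)) :
    Tendsto B atTop (nhds A) := by
  have hBm := measurable_of_monotone_exp_mul hB
  have hBexp : ∀ x y, x ≤ y → B x ≤ Real.exp (y - x) * B y := fun _ _ =>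
    le_exp_sub_mul_of_monotone_exp_mul hB
  rw [tendsto_order]
  constructor
  · intro a ha
    have hcont : Continuous fun R => Real.exp (2 * R) * a + M * R := by fun_prop
    obtain ⟨R, hlt, hR : 0 < R⟩ := (((hcont.tendsto 0).eventually_lt_const
      (by simpa using ha)).filter_mono nhdsWithin_le_nhds |>.and
      (self_mem_nhdsWithin (s := Set.Ioi 0))).exists
    obtain ⟨K, hKR, hlim⟩ := hK R hR
    have hshift : Tendsto (fun y => ∫ u, B u * K (y - R - u)) atTop (nhds A) :=
      hlim.comp (tendsto_atTop_add_const_right _ (-R) tendsto_id)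
    filter_upwards [hshift.eventually_const_lt hlt] with y hy
    have hle := hKR.integral_le_exp_mul_add hBm hB0 hM hBexp hR.le y
    exact lt_of_mul_lt_mul_left (by linarith : Real.exp (2 * R) * a < Real.exp (2 * R) * B y)
      (Real.exp_pos _).le
  · intro a ha
    have hcont : Continuous fun R => Real.exp (2 * R) * A - (1 - R) * a := by fun_prop
    obtain ⟨R, hlt, hR : R ∈ Set.Ioo 0 1⟩ := (((hcont.tendsto 0).eventually_lt_const (u := 0)
      (by simpa using ha)).filter_mono nhdsWithin_le_nhds |>.and
      (Ioo_mem_nhdsGT zero_lt_one)).exists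
    obtain ⟨K, hKR, hlim⟩ := hK R hR.1
    have hshift : Tendsto (fun y => Real.exp (2 * R) * ∫ u, B u * K (y + R - u)) atTop
        (nhds (Real.exp (2 * R) * A)) :=
      (hlim.comp (tendsto_atTop_add_const_right _ R tendsto_id)).const_mul _
    filter_upwards [hshift.eventually_lt_const (sub_neg.1 hlt)] with y hy
    exact lt_of_mul_lt_mul_left
      ((hKR.one_sub_mul_le_exp_mul_integral hBm hB0 hM hBexp hR.1.le y).trans_lt hy)
      (sub_pos.2 hR.2).le

/-- The Fejér kernel contracted by the factor `T` and normalised to total mass `1`. -/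
noncomputable def fejerDensity (T v : ℝ) : ℝ := T / (∫ x, fejer x) * fejer (T * v)

lemma integrable_fejerDensity (hT : 0 < T) : Integrable (fejerDensity T) :=
  (integrable_fejer.comp_mul_left' hT.ne').const_mul _

lemma eventually_isConcentratedKernel_fejerDensity (hR : 0 < R) :
    ∀ᶠ T in atTop, IsConcentratedKernel (fejerDensity T) R := by
  have hc := integral_fejer_pos
  have hmass : Tendsto (fun T : ℝ => (∫ x in -(T * R)..T * R, fejer x) / ∫ x, fejer x) atTop
      (nhds 1) := by
    have hTR : Tendsto (fun T : ℝ => T * R) atTop atTop := tendsto_id.atTop_mul_const hR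
    simpa [hc.ne'] using (intervalIntegral_tendsto_integral integrable_fejer
      (tendsto_neg_atTop_atBot.comp hTR) hTR).div_const (∫ x, fejer x)
  filter_upwards [hmass.eventually_const_le (sub_lt_self 1 hR), eventually_gt_atTop 0]
    with T hTR hT
  refine ⟨fun v => mul_nonneg (by positivity) (fejer_nonneg _), integrable_fejerDensity hT, ?_, ?_⟩
  · simp only [fejerDensity]
    rw [integral_const_mul, Measure.integral_comp_mul_left, abs_of_pos (inv_pos.2 hT), smul_eq_mul]
    field_simp
  · simp only [fejerDensity]
    rw [intervalIntegral.integral_const_mul, div_mul_eq_mul_div,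
      intervalIntegral.mul_integral_comp_mul_left, mul_neg]
    exact hTR

lemma integral_tent_div_mul_exp (hT : 0 < T) (v : ℝ) :
    ∫ t in -T..T, (((1 - |t / T|) / ∫ x, fejer x : ℝ) : ℂ) * Complex.exp (Complex.I * t * v) =
      fejerDensity T v := by
  have hscale := intervalIntegral.integral_comp_div (a := -T) (b := T)
    (fun t : ℝ => ((1 - |t| : ℝ) : ℂ) * Complex.exp (Complex.I * t * (T * v : ℝ))) hT.ne'
  rw [neg_div, div_self hT.ne', integral_tent_mul_exp, Complex.real_smul] at hscale
  have hT' : (T : ℂ) ≠ 0 := by exact_mod_cast hT.ne'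
  rw [fejerDensity, Complex.ofReal_mul, Complex.ofReal_div, div_mul_eq_mul_div, ← hscale,
    ← intervalIntegral.integral_div]
  refine intervalIntegral.integral_congr fun t _ => ?_
  rw [show Complex.I * (t / T : ℝ) * (T * v : ℝ) = Complex.I * t * v by push_cast; field_simp]
  push_cast
  ring

lemma tendsto_integral_Ioi_comp_sub_left (hK : Integrable K) :
    Tendsto (fun y => ∫ u in Set.Ioi 0, K (y - u)) atTop (nhds (∫ v, K v)) := by
  refine ((aecover_Iio tendsto_id).integral_tendsto_of_countably_generated hK).congr fun y => ?_
  rw [← integral_indicator measurableSet_Iio, ← integral_indicator measurableSet_Ioi,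
    ← integral_sub_left_eq_self _ _ y]
  refine integral_congr_ae (Eventually.of_forall fun u => ?_)
  simp [Set.indicator]

variable {G : ℂ → ℂ}

lemma tendsto_integral_mul_fejerDensity (hBm : Measurable B) (hM : ∀ u, ‖B u‖ ≤ M)
    (hBneg : ∀ u < 0, B u = 0) (hG : ContinuousOn G {s | 0 ≤ s.re})
    (hBG : ∀ s : ℂ, 0 < s.re →
      ∫ u in Set.Ioi (0 : ℝ), ((B u - A : ℝ) : ℂ) * Complex.exp (-(s * u)) = G s)
    (hT : 0 < T) :
    Tendsto (fun y => ∫ u, B u * fejerDensity T (y - u)) atTop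
      (nhds (A * ∫ v, fejerDensity T v)) := by
  have hK := integrable_fejerDensity hT
  have hoscC := tendsto_integral_mul_kernel_of_laplace (D := fun u => ((B u - A : ℝ) : ℂ))
    (K := fun v => (fejerDensity T v : ℂ)) (M := M + ‖A‖) (by fun_prop)
    (fun u => by
      rw [Complex.norm_real]
      exact (norm_sub_le _ _).trans (by gcongr; exact hM u))
    hG hBG (by linarith : -T ≤ T) (by fun_prop) hK.ofReal (integral_tent_div_mul_exp hT)
  have hosc : Tendsto (fun y => ∫ u in Set.Ioi (0 : ℝ), (B u - A) * fejerDensity T (y - u)) atTop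
      (nhds 0) := by
    refine ((Complex.continuous_re.tendsto 0).comp hoscC).congr fun y => ?_
    simp only [Function.comp_apply, ← Complex.ofReal_mul]
    rw [integral_complex_ofReal, Complex.ofReal_re]
  have hlim := hosc.add ((tendsto_integral_Ioi_comp_sub_left hK).const_mul A)
  rw [zero_add] at hlim
  refine hlim.congr fun y => ?_
  have hKy := hK.comp_sub_left y
  have hBK : Integrable fun u => B u * fejerDensity T (y - u) :=
    hKy.bdd_mul hBm.aestronglyMeasurable (Eventually.of_forall hM)
  have hsupp : ∫ u, B u * fejerDensity T (y - u) =
      ∫ u in Set.Ioi 0, B u * fejerDensity T (y - u) := by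
    rw [← integral_Ici_eq_integral_Ioi, setIntegral_eq_integral_of_forall_compl_eq_zero]
    intro u hu
    rw [hBneg u (not_le.1 hu), zero_mul]
  simp_rw [hsupp, sub_mul]
  rw [integral_sub hBK.integrableOn (hKy.const_mul A).integrableOn, integral_const_mul,
    sub_add_cancel]

theorem tendsto_of_laplace (hB0 : ∀ u, 0 ≤ B u) (hM : ∀ u, ‖B u‖ ≤ M) (hBneg : ∀ u < 0, B u = 0)
    (hB : Monotone fun u => Real.exp u * B u) (hG : ContinuousOn G {s | 0 ≤ s.re})
    (hBG : ∀ s : ℂ, 0 < s.re →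
      ∫ u in Set.Ioi (0 : ℝ), ((B u - A : ℝ) : ℂ) * Complex.exp (-(s * u)) = G s) :
    Tendsto B atTop (nhds A) := by
  refine tendsto_of_tendsto_integral_concentratedKernel hB0 hM hB fun R hR => ?_
  obtain ⟨T, hK, hT⟩ :=
    ((eventually_isConcentratedKernel_fejerDensity hR).and (eventually_gt_atTop 0)).exists
  have hlim := tendsto_integral_mul_fejerDensity (measurable_of_monotone_exp_mul hB) hM hBneg hG
    hBG hT
  rw [hK.integral_eq_one, mul_one] at hlim
  exact ⟨_, hK, hlim⟩

end Tauberian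

section WienerIkehara

open MeasureTheory

variable {f : ℕ → ℝ} {A C : ℝ}

lemma add_one_ne_zero_of_re_nonneg {s : ℂ} (hs : 0 ≤ s.re) : s + 1 ≠ 0 := fun h => by
  simp only [eq_neg_of_add_eq_zero_left h, Complex.neg_re, Complex.one_re] at hs
  norm_num at hs

lemma norm_sum_Icc_floor_exp_mul_exp_neg_le (hf : ∀ n, 0 ≤ f n)
    (hC : ∀ n : ℕ, ∑ k ∈ Finset.Icc 1 n, f k ≤ C * n) (u : ℝ) :
    ‖(∑ n ∈ Finset.Icc 1 ⌊Real.exp u⌋₊, f n) * Real.exp (-u)‖ ≤ C := by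
  have hC0 : 0 ≤ C := by simpa using (hf 1).trans (by simpa using hC 1)
  rw [Real.norm_of_nonneg (mul_nonneg (Finset.sum_nonneg fun i _ => hf i) (Real.exp_pos _).le),
    Real.exp_neg, ← div_eq_mul_inv, div_le_iff₀ (Real.exp_pos u)]
  exact (hC _).trans (by gcongr; exact Nat.floor_le (Real.exp_pos u).le)

lemma integral_sum_Icc_floor_exp_mul_exp_neg (hf : ∀ n, 0 ≤ f n)
    (hC : ∀ n : ℕ, ∑ k ∈ Finset.Icc 1 n, f k ≤ C * n) {s : ℂ} (hs : 0 < s.re) :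
    ∫ u in Set.Ioi (0 : ℝ), (((∑ n ∈ Finset.Icc 1 ⌊Real.exp u⌋₊, f n) * Real.exp (-u) : ℝ) : ℂ) *
      Complex.exp (-(s * u)) = LSeries (fun n => (f n : ℂ)) (s + 1) / (s + 1) := by
  have hs1 : s + 1 ≠ 0 := add_one_ne_zero_of_re_nonneg hs.le
  have hO : (fun n : ℕ => ∑ k ∈ Finset.Icc 1 n, f k) =O[atTop] fun n => (n : ℝ) ^ (1 : ℝ) :=
    Asymptotics.IsBigO.of_bound C (Eventually.of_forall fun n => by
      simpa [abs_of_nonneg (Finset.sum_nonneg fun i _ => hf i)] using hC n)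
  rw [LSeries_eq_mul_integral_of_nonneg f zero_le_one (by simpa using hs) hO hf,
    mul_div_cancel_left₀ _ hs1, ← Real.exp_zero, ← integral_comp_exp_Ioi]
  refine setIntegral_congr_fun measurableSet_Ioi fun u _ => ?_
  simp only [Complex.real_smul, Complex.cpow_def_of_ne_zero
    (Complex.ofReal_ne_zero.2 (Real.exp_ne_zero u)), ← Complex.ofReal_log (Real.exp_pos u).le,
    Real.log_exp]
  push_cast
  rw [mul_left_comm, ← Complex.exp_add, mul_assoc, ← Complex.exp_add]
  congr 2
  ring

lemma monotone_exp_mul_sum_Icc_floor_exp (hf : ∀ n, 0 ≤ f n) :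
    Monotone fun u : ℝ =>
      Real.exp u * ((∑ n ∈ Finset.Icc 1 ⌊Real.exp u⌋₊, f n) * Real.exp (-u)) := by
  intro u v huv
  simp only [Real.exp_neg, mul_left_comm (Real.exp _), mul_inv_cancel₀ (Real.exp_ne_zero _),
    mul_one]
  exact Finset.sum_le_sum_of_subset_of_nonneg (by gcongr) fun n _ _ => hf n

lemma integral_sum_Icc_floor_exp_mul_exp_neg_sub (hf : ∀ n, 0 ≤ f n)
    (hC : ∀ n : ℕ, ∑ k ∈ Finset.Icc 1 n, f k ≤ C * n) {s : ℂ} (hs : 0 < s.re) :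
    ∫ u in Set.Ioi (0 : ℝ),
        (((∑ n ∈ Finset.Icc 1 ⌊Real.exp u⌋₊, f n) * Real.exp (-u) - A : ℝ) : ℂ) *
          Complex.exp (-(s * u)) =
      LSeries (fun n => (f n : ℂ)) (s + 1) / (s + 1) - A / s := by
  have hint := integral_exp_mul_complex_Ioi (a := -s) (by simpa using hs) 0
  simp only [neg_mul] at hint
  simp_rw [Complex.ofReal_sub, sub_mul]
  rw [integral_sub
      (integrableOn_mul_exp_neg_of_norm_le (M := C)
        (D := fun u => (((∑ n ∈ Finset.Icc 1 ⌊Real.exp u⌋₊, f n) * Real.exp (-u) : ℝ) : ℂ))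
        (Complex.measurable_ofReal.comp
          (measurable_of_monotone_exp_mul (monotone_exp_mul_sum_Icc_floor_exp hf)))
        (fun u => by
          simpa only [Complex.norm_real] using norm_sum_Icc_floor_exp_mul_exp_neg_le hf hC u) hs)
      (integrableOn_mul_exp_neg_of_norm_le (D := fun _ => (A : ℂ)) (M := ‖(A : ℂ)‖)
        measurable_const (fun _ => le_rfl) hs),
    integral_sum_Icc_floor_exp_mul_exp_neg hf hC hs, integral_const_mul, hint]
  simp [div_eq_mul_inv]

/-- The Wiener–Ikehara theorem, under an a priori Chebyshev bound. -/
theorem tendsto_sum_div_of_continuousOn_LSeries {G : ℂ → ℂ} (hf : ∀ n, 0 ≤ f n)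
    (hC : ∀ n : ℕ, ∑ k ∈ Finset.Icc 1 n, f k ≤ C * n) (hG : ContinuousOn G {s | 1 ≤ s.re})
    (hfG : ∀ s : ℂ, 1 < s.re → G s = LSeries (fun n => (f n : ℂ)) s - A / (s - 1)) :
    Tendsto (fun x : ℝ => (∑ n ∈ Finset.Icc 1 ⌊x⌋₊, f n) / x) atTop (nhds A) := by
  set B : ℝ → ℝ := fun u => (∑ n ∈ Finset.Icc 1 ⌊Real.exp u⌋₊, f n) * Real.exp (-u)
  have hM : ∀ u, ‖B u‖ ≤ C := norm_sum_Icc_floor_exp_mul_exp_neg_le hf hC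
  have hmono : Monotone fun u => Real.exp u * B u := monotone_exp_mul_sum_Icc_floor_exp hf
  have hG' : ContinuousOn (fun s => (G (s + 1) - A) / (s + 1)) {s | 0 ≤ s.re} :=
    ((hG.comp (g := G) (f := fun s => s + 1) (by fun_prop) fun s hs => by simpa using hs).sub
      continuousOn_const).div (by fun_prop) fun s hs => add_one_ne_zero_of_re_nonneg hs
  refine ((tendsto_of_laplace (fun u => mul_nonneg (Finset.sum_nonneg fun i _ => hf i)
    (Real.exp_pos _).le) hM (fun u hu => ?_) hmono hG' fun s hs => ?_).comp
    Real.tendsto_log_atTop).congr' ?_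
  · simp [Nat.floor_eq_zero.2 (Real.exp_lt_one_iff.2 hu)]
  · rw [integral_sum_Icc_floor_exp_mul_exp_neg_sub hf hC hs, hfG _ (by simpa using hs),
      add_sub_cancel_right]
    have hs0 : s ≠ 0 := by rintro rfl; simp at hs
    field_simp [add_one_ne_zero_of_re_nonneg hs.le]
    ring
  · filter_upwards [eventually_gt_atTop 0] with x hx
    simp [Real.exp_log hx, Real.exp_neg, div_eq_mul_inv]

end WienerIkehara

section PrimeDensity

open ArithmeticFunction ArithmeticFunction.vonMangoldt

theorem tendsto_sum_residueClass_div {q : ℕ} [NeZero q] {a : ZMod q} (ha : IsUnit a) :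
    Tendsto (fun x : ℝ => (∑ n ∈ Finset.Icc 1 ⌊x⌋₊, residueClass a n) / x) atTop
      (nhds (q.totient : ℝ)⁻¹) := by
  refine tendsto_sum_div_of_continuousOn_LSeries (C := Real.log 4 + 4) (residueClass_nonneg a)
    (fun n => ?_) (continuousOn_LFunctionResidueClassAux a) fun s hs => by
      simpa using eqOn_LFunctionResidueClassAux ha hs
  have hψ := Chebyshev.psi_le_const_mul_self (Nat.cast_nonneg (α := ℝ) n)
  rw [Chebyshev.psi, Nat.floor_natCast] at hψ
  exact (Finset.sum_le_sum fun k _ => residueClass_le a k).trans hψ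

/-- The real-valued function `a` on the primes has average `c`, each prime `p` being counted with
weight `log p`. -/
def HasPrimeDensity (a : ℕ → ℝ) (c : ℝ) : Prop :=
  Tendsto (fun N : ℕ => (∑ p ∈ N.primesLE, a p * Real.log p) / N) atTop (nhds c)

namespace HasPrimeDensity

variable {a b : ℕ → ℝ} {c c' : ℝ}

lemma add (ha : HasPrimeDensity a c) (hb : HasPrimeDensity b c') :
    HasPrimeDensity (fun p => a p + b p) (c + c') :=
  (Tendsto.add ha hb).congr fun N => by simp only [← add_div, add_mul, Finset.sum_add_distrib]

lemma const_mul (r : ℝ) (ha : HasPrimeDensity a c) :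
    HasPrimeDensity (fun p => r * a p) (r * c) :=
  (Tendsto.const_mul r ha).congr fun N => by simp only [mul_assoc, ← Finset.mul_sum, mul_div_assoc]

lemma sum {ι : Type*} {s : Finset ι} {a : ι → ℕ → ℝ} {c : ι → ℝ}
    (h : ∀ i ∈ s, HasPrimeDensity (a i) (c i)) :
    HasPrimeDensity (fun p => ∑ i ∈ s, a i p) (∑ i ∈ s, c i) :=
  (tendsto_finsetSum s h).congr fun N => by
    simp only [← Finset.sum_div, Finset.sum_mul]
    rw [Finset.sum_comm]

lemma congr (ha : HasPrimeDensity a c) {m : ℕ} (hab : ∀ p, p.Prime → m < p → a p = b p) :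
    HasPrimeDensity b c := by
  have hlim := ((tendsto_const_nhds (x := ∑ p ∈ m.primesLE, (b p - a p) * Real.log p)).div_atTop
    tendsto_natCast_atTop_atTop).add ha
  rw [zero_add] at hlim
  refine hlim.congr' ?_
  filter_upwards [eventually_ge_atTop m] with N hN
  rw [← add_div, Finset.sum_subset (Nat.primesLE_mono hN) fun p hp hpm => ?_,
    ← Finset.sum_add_distrib]
  · exact congrArg (· / (N : ℝ)) (Finset.sum_congr rfl fun p _ => by ring)
  · rw [hab p (Nat.prime_of_mem_primesLE hp)
      (not_le.1 fun h => hpm (Nat.mem_primesLE.2 ⟨h, Nat.prime_of_mem_primesLE hp⟩)),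
      sub_self, zero_mul]

end HasPrimeDensity

lemma tendsto_sqrt_mul_log_div_atTop :
    Tendsto (fun N : ℕ => 2 * Real.sqrt N * Real.log N / N) atTop (nhds 0) := by
  have hlog : Tendsto (fun x : ℝ => 2 * (Real.log x / x ^ (1 / 2 : ℝ))) atTop (nhds (2 * 0)) :=
    (isLittleO_log_rpow_atTop (by norm_num)).tendsto_div_nhds_zero.const_mul 2
  rw [mul_zero] at hlog
  refine (hlog.comp tendsto_natCast_atTop_atTop).congr fun N => ?_
  rw [Function.comp_apply, ← Real.sqrt_eq_rpow, mul_right_comm, mul_div_assoc,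
    Real.sqrt_div_self, div_eq_mul_inv, mul_assoc]

theorem hasPrimeDensity_residueClass {q : ℕ} [NeZero q] {a : ZMod q} (ha : IsUnit a) :
    HasPrimeDensity (fun p => if (p : ZMod q) = a then 1 else 0) (q.totient : ℝ)⁻¹ := by
  have hψ := (tendsto_sum_residueClass_div ha).comp tendsto_natCast_atTop_atTop
  have hsplit : ∀ N : ℕ, ∑ n ∈ Finset.Icc 1 N, residueClass a n =
      ∑ p ∈ N.primesLE, (if (p : ZMod q) = a then 1 else 0) * Real.log p +
        ∑ n ∈ Finset.Icc 1 N with ¬ n.Prime, residueClass a n := by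
    intro N
    have hfilter : N.primesLE = Finset.filter Nat.Prime (Finset.Icc 1 N) := by
      ext p
      simp only [Nat.mem_primesLE, Finset.mem_filter, Finset.mem_Icc]
      exact ⟨fun h => ⟨⟨h.2.one_le, h.1⟩, h.2⟩, fun h => ⟨h.1.2, h.2⟩⟩
    rw [← Finset.sum_filter_add_sum_filter_not _ Nat.Prime, ← hfilter]
    refine congrArg (· + _) (Finset.sum_congr rfl fun p hp => ?_)
    have hp := Nat.prime_of_mem_primesLE hp
    by_cases hpa : (p : ZMod q) = a <;>
      simp [residueClass, Set.indicator, hpa, vonMangoldt_apply_prime hp]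
  have herr : Tendsto (fun N : ℕ => (∑ n ∈ Finset.Icc 1 N with ¬ n.Prime, residueClass a n) / N)
      atTop (nhds 0) := by
    refine squeeze_zero' (Eventually.of_forall fun N => div_nonneg
      (Finset.sum_nonneg fun n _ => residueClass_nonneg a n) N.cast_nonneg) ?_
      tendsto_sqrt_mul_log_div_atTop
    filter_upwards [eventually_ge_atTop 1] with N hN
    have hle := Chebyshev.psi_sub_theta_le (x := N) (by exact_mod_cast hN)
    rw [Chebyshev.psi_sub_theta_eq_sum_not_prime, Nat.floor_natCast] at hle
    gcongr
    exact (Finset.sum_le_sum fun n _ => residueClass_le a n).trans hle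
  have hlim := hψ.sub herr
  rw [sub_zero] at hlim
  refine hlim.congr fun N => ?_
  rw [Function.comp_apply, Nat.floor_natCast, hsplit, add_div, add_sub_cancel_right]

end PrimeDensity

section BrunTitchmarsh

open Finset

variable {l : ℕ}

lemma dvd_prod_mul_add_one_of_coprime {M : ℕ} (K : ℕ) (hlM : l.Coprime M) (hM : M ∣ K.factorial) :
    M ∣ ∏ j ∈ range K, (l * (j + 1) + 1) := by
  obtain ⟨m, -, hm⟩ := Nat.exists_mul_mod_eq_of_coprime 1 hlM
    (ne_zero_of_dvd_ne_zero K.factorial_ne_zero hM)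
  have hasc : M ∣ ∏ j ∈ range K, (m + 1 + j) := by
    rw [← Nat.ascFactorial_eq_prod_range]
    exact hM.trans (Nat.factorial_dvd_ascFactorial _ _)
  have hmod : ∏ j ∈ range K, (l * (j + 1) + 1) ≡ ∏ j ∈ range K, (l * (m + 1 + j)) [MOD M] :=
    Nat.ModEq.prod fun j _ => by
      rw [show l * (m + 1 + j) = l * (j + 1) + l * m by ring]
      exact Nat.ModEq.add_left _ (Nat.ModEq.symm hm)
  rw [← Nat.modEq_zero_iff_dvd]
  refine hmod.trans ?_
  rw [Nat.modEq_zero_iff_dvd, prod_mul_distrib]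
  exact hasc.mul_left _

lemma factorial_dvd_pow_mul_prod_mul_add_one (hl : l.Prime) (K : ℕ) :
    K.factorial ∣ l ^ K * ∏ j ∈ range K, (l * (j + 1) + 1) := by
  have hK := K.factorial_ne_zero
  nth_rw 1 [← Nat.ordProj_mul_ordCompl_eq_self K.factorial l]
  refine Nat.mul_dvd_mul (pow_dvd_pow l ?_)
    (dvd_prod_mul_add_one_of_coprime K (Nat.coprime_ordCompl hl hK) (Nat.ordCompl_dvd _ _))
  exact (Nat.factorization_factorial_le_div_pred hl K).trans (Nat.div_le_self _ _)

lemma prod_mul_add_one_le (hl : 1 ≤ l) (K : ℕ) :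
    ∏ j ∈ range K, (l * (j + 1) + 1) ≤ l ^ K * (K + 1).factorial := by
  calc ∏ j ∈ range K, (l * (j + 1) + 1) ≤ ∏ j ∈ range K, (l * (j + 1 + 1)) :=
        prod_le_prod' fun j _ => by nlinarith
    _ = l ^ K * (K + 1).factorial := by
        rw [prod_mul_distrib, prod_const, card_range, ← prod_range_add_one_eq_factorial,
          prod_range_succ']
        simp

lemma prod_dvd_prod_mul_add_one {K : ℕ} {T : Finset ℕ} (hl : 0 < l)
    (hT : ∀ p ∈ T, p.Prime ∧ l ∣ p - 1 ∧ p ≤ l * K + 1) :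
    ∏ p ∈ T, p ∣ ∏ j ∈ range K, (l * (j + 1) + 1) := by
  refine prod_primes_dvd _ (fun p hp => (hT p hp).1.prime) fun p hp => ?_
  obtain ⟨hpp, ⟨j, hj⟩, hpK⟩ := hT p hp
  have hp2 := hpp.two_le
  have hj0 : j ≠ 0 := by rintro rfl; omega
  have hjK : j ≤ K := Nat.le_of_mul_le_mul_left (by omega) hl
  have hpj : p = l * (j - 1 + 1) + 1 := by rw [Nat.sub_add_cancel (by omega)]; omega
  rw [hpj]
  exact dvd_prod_of_mem (fun j => l * (j + 1) + 1) (mem_range.2 (by omega))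

/- The product of the primes `p ∈ (K, lK + 1]` congruent to `1` modulo `l` divides
`l ^ K * ∏ (l * j + 1)` and is prime to its divisor `K!`, as in Chebyshev's argument. -/
lemma prod_primes_le_pow_mul (hl : l.Prime) {K : ℕ} {T : Finset ℕ}
    (hT : ∀ p ∈ T, p.Prime ∧ l ∣ p - 1 ∧ p ≤ l * K + 1) (hKT : ∀ p ∈ T, K < p) :
    ∏ p ∈ T, p ≤ l ^ (2 * K) * (K + 1) := by
  have hcop : Nat.Coprime (∏ p ∈ T, p) K.factorial :=
    Nat.Coprime.prod_left fun p hp => (hT p hp).1.coprime_factorial_of_lt (hKT p hp)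
  have hdvd := hcop.mul_dvd_of_dvd_of_dvd
    ((prod_dvd_prod_mul_add_one hl.pos hT).mul_left (l ^ K))
    (factorial_dvd_pow_mul_prod_mul_add_one hl K)
  refine Nat.le_of_mul_le_mul_right (c := K.factorial) ?_ K.factorial_pos
  calc (∏ p ∈ T, p) * K.factorial ≤ l ^ K * ∏ j ∈ range K, (l * (j + 1) + 1) :=
        Nat.le_of_dvd (Nat.mul_pos (pow_pos hl.pos _) (prod_pos fun i _ => by omega)) hdvd
    _ ≤ l ^ K * (l ^ K * (K + 1).factorial) :=
        Nat.mul_le_mul_left _ (prod_mul_add_one_le hl.one_le K)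
    _ = l ^ (2 * K) * (K + 1) * K.factorial := by rw [Nat.factorial_succ]; ring

lemma card_mul_log_le (hl : l.Prime) {K : ℕ} {T : Finset ℕ}
    (hT : ∀ p ∈ T, p.Prime ∧ l ∣ p - 1 ∧ p ≤ l * K + 1) (hKT : ∀ p ∈ T, K < p) (hK : 0 < K) :
    #T * Real.log K ≤ 2 * K * Real.log l + K := by
  have hl0 : (0 : ℝ) < l := by exact_mod_cast hl.pos
  have hpow : (K : ℝ) ^ #T ≤ (l : ℝ) ^ (2 * K) * (K + 1) := by
    exact_mod_cast (pow_card_le_prod T _ K fun p hp => (hKT p hp).le).trans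
      (prod_primes_le_pow_mul hl hT hKT)
  have hlog := Real.log_le_log (by positivity) hpow
  rw [Real.log_pow, Real.log_mul (by positivity) (by positivity), Real.log_pow] at hlog
  have hK1 := Real.log_le_sub_one_of_pos (show (0 : ℝ) < K + 1 by positivity)
  push_cast at hlog
  linarith

lemma primeCounting_mul_log_le (K : ℕ) : Nat.primeCounting K * Real.log K ≤ 5 * K := by
  rcases lt_or_ge K 2 with hK | hK
  · interval_cases K <;> simp
  have hK' : (2 : ℝ) ≤ K := by exact_mod_cast hK
  have hπ := Chebyshev.pi_le_log4_mul_div (x := K) (by linarith)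
  have hlog : 0 < Real.log K := Real.log_pos (by linarith)
  have hlog_le := Real.log_le_sub_one_of_pos (Real.sqrt_pos.2 (show (0 : ℝ) < K by linarith))
  have hlog4 : Real.log 4 ≤ 1.4 := by
    rw [Real.log_four_eq]
    linarith [Real.log_two_lt_d9]
  rw [Real.log_sqrt (by linarith)] at hπ hlog_le
  rw [Nat.floor_natCast] at hπ
  calc Nat.primeCounting K * Real.log K
      ≤ (Real.log 4 * K / (Real.log K / 2) + √K) * Real.log K := by gcongr
    _ = 2 * Real.log 4 * K + √K * Real.log K := by field_simp
    _ ≤ 2 * 1.4 * K + √K * (2 * √K) := by gcongr; linarith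
    _ ≤ 5 * K := by nlinarith [Real.mul_self_sqrt (show (0 : ℝ) ≤ K by linarith)]

lemma log_le_four_mul_log_div (hl : l ≠ 0) (hl1 : l ≠ 1) {N : ℕ} (hN : l * l ≤ N) :
    Real.log N ≤ 4 * Real.log (N / l : ℕ) := by
  have hlK : l ≤ N / l := (Nat.le_div_iff_mul_le (Nat.pos_of_ne_zero hl)).2 hN
  have hNK : N < l * (N / l + 1) := Nat.lt_mul_div_succ N (Nat.pos_of_ne_zero hl)
  have hpow : N ≤ (N / l) ^ 4 := by
    generalize N / l = K at hlK hNK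
    have hK : K + 1 ≤ K * K := by nlinarith [show 2 ≤ l by omega]
    calc N ≤ K * (K * K) * 1 := by rw [mul_one]; exact hNK.le.trans (Nat.mul_le_mul hlK hK)
      _ ≤ K * (K * K) * K := by gcongr; omega
      _ = K ^ 4 := by ring
  have hN0 : (0 : ℝ) < N := by
    exact_mod_cast (Nat.mul_pos (Nat.pos_of_ne_zero hl) (Nat.pos_of_ne_zero hl)).trans_le hN
  have hlog := Real.log_le_log hN0 (show (N : ℝ) ≤ ((N / l : ℕ) : ℝ) ^ 4 by exact_mod_cast hpow)
  rwa [Real.log_pow] at hlog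

lemma card_primesLE_filter_dvd_sub_one_lt_mul_log_le (hl : l.Prime) {N : ℕ} (hK : 0 < N / l) :
    #{p ∈ N.primesLE | l ∣ p - 1 ∧ N / l < p} * Real.log (N / l : ℕ) ≤
      2 * (N / l : ℕ) * Real.log l + (N / l : ℕ) := by
  refine card_mul_log_le hl (fun p hp => ?_) (fun p hp => (mem_filter.1 hp).2.2) hK
  obtain ⟨hpN, ⟨j, hj⟩, -⟩ := mem_filter.1 hp
  have hp2 := (Nat.prime_of_mem_primesLE hpN).two_le
  have hNK : N < l * (N / l + 1) := Nat.lt_mul_div_succ N hl.pos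
  have hjK : j < N / l + 1 :=
    Nat.lt_of_mul_lt_mul_left (a := l) (by have := Nat.le_of_mem_primesLE hpN; omega)
  have hljK : l * j ≤ l * (N / l) := Nat.mul_le_mul_left _ (by omega)
  exact ⟨Nat.prime_of_mem_primesLE hpN, ⟨j, hj⟩, by omega⟩

lemma card_primesLE_filter_dvd_sub_one_le (l N K : ℕ) :
    #{p ∈ N.primesLE | l ∣ p - 1} ≤
      #{p ∈ N.primesLE | l ∣ p - 1 ∧ K < p} + Nat.primeCounting K := by
  rw [← Nat.primesLE_card_eq_primeCounting]
  refine (card_le_card fun p hp => ?_).trans (card_union_le _ K.primesLE)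
  obtain ⟨hpN, hlp⟩ := mem_filter.1 hp
  rw [mem_union, mem_filter, Nat.mem_primesLE (n := K)]
  rcases lt_or_ge K p with hKp | hpK
  · exact Or.inl ⟨hpN, hlp, hKp⟩
  · exact Or.inr ⟨hpK, Nat.prime_of_mem_primesLE hpN⟩

theorem card_primesLE_filter_dvd_sub_one_mul_log_le_of_mul_self_le (hl : l.Prime) {N : ℕ}
    (hN : l * l ≤ N) :
    #{p ∈ N.primesLE | l ∣ p - 1} * Real.log N ≤ 60 * (N / l) * Real.log l := by
  have hlog4 := log_le_four_mul_log_div hl.ne_zero hl.ne_one hN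
  have hlK : l ≤ N / l := (Nat.le_div_iff_mul_le hl.pos).2 hN
  have hKN : ((N / l : ℕ) : ℝ) ≤ N / l := Nat.cast_div_le
  have hT := card_primesLE_filter_dvd_sub_one_lt_mul_log_le hl (N := N) (hl.pos.trans_le hlK)
  have hcard := card_primesLE_filter_dvd_sub_one_le l N (N / l)
  set K := N / l
  set T := {p ∈ N.primesLE | l ∣ p - 1 ∧ K < p}
  have hlogl : 1 / 2 ≤ Real.log l := by
    linarith [Real.log_two_gt_d9, Real.log_le_log two_pos (Nat.cast_le (α := ℝ).2 hl.two_le)]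
  have hlogK : 0 ≤ Real.log K := Real.log_natCast_nonneg K
  have hK0 : (0 : ℝ) ≤ K := K.cast_nonneg
  calc #{p ∈ N.primesLE | l ∣ p - 1} * Real.log N
      ≤ (#T + Nat.primeCounting K : ℕ) * (4 * Real.log K) := by gcongr
    _ = 4 * (#T * Real.log K) + 4 * (Nat.primeCounting K * Real.log K) := by push_cast; ring
    _ ≤ 4 * (2 * K * Real.log l + K) + 4 * (5 * K) := by
        linarith [primeCounting_mul_log_le K]
    _ ≤ 60 * K * Real.log l := by nlinarith
    _ ≤ 60 * (N / l) * Real.log l := by gcongr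

end BrunTitchmarsh

section RegularWeight

open Finset Asymptotics

variable {f : ℕ → ℝ}

/-- A weight on `ℕ` of regular growth. The last condition excludes exponential growth and makes
Abel summation lossless. -/
structure IsRegularWeight (f : ℕ → ℝ) : Prop where
  nonneg : ∀ n, 0 ≤ f n
  monotone : Monotone f
  exists_pos : ∃ n, 0 < f n
  mul_isBigO : (fun N : ℕ => N * f N) =O[atTop] fun N => ∑ n ∈ range (N + 1), f n

namespace IsRegularWeight

lemma tendsto_sum_atTop (hf : IsRegularWeight f) :
    Tendsto (fun N => ∑ n ∈ range (N + 1), f n) atTop atTop := by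
  obtain ⟨m, hm⟩ := hf.exists_pos
  have hlin : Tendsto (fun N : ℕ => ((N + 1 - m : ℕ) : ℝ) * f m) atTop atTop :=
    (tendsto_natCast_atTop_atTop.comp ((tendsto_sub_atTop_nat m).comp
      (tendsto_add_atTop_nat 1))).atTop_mul_const hm
  refine tendsto_atTop_mono (fun N => ?_) hlin
  calc ((N + 1 - m : ℕ) : ℝ) * f m ≤ ∑ n ∈ Ico m (N + 1), f n := by
        rw [← Nat.card_Ico, ← nsmul_eq_mul]
        exact card_nsmul_le_sum _ _ _ fun n hn => hf.monotone (mem_Ico.1 hn).1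
    _ ≤ ∑ n ∈ range (N + 1), f n :=
        sum_le_sum_of_subset_of_nonneg (fun n hn => mem_range.2 (mem_Ico.1 hn).2)
          fun n _ _ => hf.nonneg n

lemma sum_mul_sub_isBigO (hf : IsRegularWeight f) :
    (fun N => ∑ n ∈ range N, (n * (f (n + 1) - f n) + f n)) =O[atTop]
      fun N => ∑ n ∈ range (N + 1), f n := by
  have hbound : ∀ N : ℕ, ‖∑ n ∈ range N, (n * (f (n + 1) - f n) + f n)‖ ≤
      N * f N + ∑ n ∈ range (N + 1), f n := by
    intro N
    have hdiff : ∀ n, 0 ≤ f (n + 1) - f n := fun n => sub_nonneg.2 (hf.monotone n.le_succ)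
    rw [Real.norm_of_nonneg (sum_nonneg fun n _ =>
      add_nonneg (mul_nonneg n.cast_nonneg (hdiff n)) (hf.nonneg n)), sum_add_distrib]
    gcongr ?_ + ?_
    · calc ∑ n ∈ range N, n * (f (n + 1) - f n) ≤ ∑ n ∈ range N, N * (f (n + 1) - f n) :=
            sum_le_sum fun n hn => mul_le_mul_of_nonneg_right
              (Nat.cast_le.2 (mem_range.1 hn).le) (hdiff n)
        _ = N * f N - N * f 0 := by rw [← mul_sum, sum_range_sub, mul_sub]
        _ ≤ N * f N := sub_le_self _ (mul_nonneg N.cast_nonneg (hf.nonneg 0))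
    · exact sum_le_sum_of_subset_of_nonneg (range_mono N.le_succ) fun n _ _ => hf.nonneg n
  exact (IsBigO.of_norm_le hbound).trans (hf.mul_isBigO.add (isBigO_refl _ _))

/-- Abel summation. -/
lemma sum_mul_isLittleO (hf : IsRegularWeight f) {e : ℕ → ℝ}
    (he : (fun N => ∑ n ∈ range (N + 1), e n) =o[atTop] fun N : ℕ => (N : ℝ)) :
    (fun N => ∑ n ∈ range (N + 1), e n * f n) =o[atTop] fun N => ∑ n ∈ range (N + 1), f n := by
  have hdiff : ∀ n, 0 ≤ f (n + 1) - f n := fun n => sub_nonneg.2 (hf.monotone n.le_succ)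
  have hbulk : (fun N => ∑ n ∈ range N, (f (n + 1) - f n) * ∑ i ∈ range (n + 1), e i) =o[atTop]
      fun N => ∑ n ∈ range N, (n * (f (n + 1) - f n) + f n) := by
    refine IsLittleO.sum_range ?_ (fun n => add_nonneg (mul_nonneg n.cast_nonneg (hdiff n))
      (hf.nonneg n)) ?_
    · refine (((isBigO_refl _ _).mul_isLittleO he).trans_isBigO
        (IsBigO.of_norm_le fun n => ?_ : _ =O[atTop] _))
      rw [mul_comm, Real.norm_of_nonneg (mul_nonneg n.cast_nonneg (hdiff n))]
      exact le_add_of_nonneg_right (hf.nonneg n)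
    · refine tendsto_atTop_mono (fun N => sum_le_sum fun n _ => le_add_of_nonneg_left
        (mul_nonneg n.cast_nonneg (hdiff n))) ((tendsto_add_atTop_iff_nat 1).1 hf.tendsto_sum_atTop)
  have hend : (fun N => f N * ∑ n ∈ range (N + 1), e n) =o[atTop]
      fun N => ∑ n ∈ range (N + 1), f n :=
    (((isBigO_refl f atTop).mul_isLittleO he).congr_right fun N => mul_comm _ _).trans_isBigO
      hf.mul_isBigO
  refine (hend.sub (hbulk.trans_isBigO hf.sum_mul_sub_isBigO)).congr_left fun N => ?_
  simpa [mul_comm] using (sum_range_by_parts f e (N + 1)).symm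

end IsRegularWeight

theorem HasPrimeDensity.tendsto_sum_mul_div {a : ℕ → ℝ} {c : ℝ} (ha : HasPrimeDensity a c)
    (hf : IsRegularWeight f) :
    Tendsto (fun N : ℕ => (∑ p ∈ N.primesLE, a p * (Real.log p * f p)) /
      ∑ n ∈ range (N + 1), f n) atTop (nhds c) := by
  set e : ℕ → ℝ := fun n => (if n.Prime then a n * Real.log n else 0) - c
  have hsum : ∀ g : ℕ → ℝ, ∀ N, ∑ n ∈ range (N + 1), e n * g n =
      ∑ p ∈ N.primesLE, a p * (Real.log p * g p) - c * ∑ n ∈ range (N + 1), g n := by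
    intro g N
    simp only [e, sub_mul, sum_sub_distrib, mul_sum, Nat.primesLE_eq_filter_range, sum_filter,
      ite_mul, zero_mul, mul_assoc]
  have he : (fun N => ∑ n ∈ range (N + 1), e n) =o[atTop] fun N : ℕ => (N : ℝ) := by
    refine (isLittleO_iff_tendsto' ?_).2 ?_
    · filter_upwards [eventually_ne_atTop 0] with N hN h
      exact absurd h (Nat.cast_ne_zero.2 hN)
    · have hlim := (ha.sub_const c).sub (tendsto_const_div_atTop_nhds_zero_nat c)
      rw [sub_self, sub_zero] at hlim
      refine hlim.congr' ?_
      filter_upwards [eventually_ne_atTop 0] with N hN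
      have hN' : (N : ℝ) ≠ 0 := Nat.cast_ne_zero.2 hN
      have h := hsum 1 N
      simp only [Pi.one_apply, mul_one, sum_const, card_range, nsmul_eq_mul, Nat.cast_add,
        Nat.cast_one] at h
      rw [h]
      field_simp
      ring
  have hlim := ((hf.sum_mul_isLittleO he).tendsto_div_nhds_zero).add_const c
  rw [zero_add] at hlim
  refine hlim.congr' ?_
  filter_upwards [hf.tendsto_sum_atTop.eventually_ne_atTop 0] with N hN
  rw [hsum, sub_div, mul_div_cancel_right₀ _ hN, sub_add_cancel]

/-- The weight `n ^ k * (n - 1) / log n`, which turns the logarithmically weighted sums of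
`HasPrimeDensity` into sums weighted by `p ^ k * (p - 1)`. -/
noncomputable def powWeight (k n : ℕ) : ℝ := (n : ℝ) ^ k * (((n : ℝ) - 1) / Real.log n)

lemma log_mul_powWeight (k : ℕ) {p : ℕ} (hp : 1 < p) :
    Real.log p * powWeight k p = (p : ℝ) ^ k * ((p : ℝ) - 1) := by
  have hlog : Real.log p ≠ 0 := (Real.log_pos (by exact_mod_cast hp)).ne'
  unfold powWeight
  field_simp

lemma sub_one_div_log_le {x y : ℝ} (hx : 1 < x) (hxy : x ≤ y) :
    (x - 1) / Real.log x ≤ (y - 1) / Real.log y := by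
  have hslope := strictConcaveOn_log_Ioi.concaveOn.slope_anti (x := 1) (by simp)
    (⟨zero_lt_one.trans hx, hx.ne'⟩ : x ∈ Set.Ioi 0 \ {1})
    ⟨zero_lt_one.trans (hx.trans_le hxy), (hx.trans_le hxy).ne'⟩ hxy
  simp only [slope_def_field, Real.log_one, sub_zero] at hslope
  rw [← inv_div, ← inv_div (Real.log y)]
  exact inv_anti₀ (div_pos (Real.log_pos (hx.trans_le hxy)) (by linarith)) hslope

lemma sub_one_div_log_natCast_nonneg (n : ℕ) : 0 ≤ ((n : ℝ) - 1) / Real.log n := by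
  rcases n.eq_zero_or_pos with rfl | hn
  · simp
  · exact div_nonneg (sub_nonneg.2 (Nat.one_le_cast.2 hn)) (Real.log_natCast_nonneg n)

lemma powWeight_nonneg (k n : ℕ) : 0 ≤ powWeight k n :=
  mul_nonneg (by positivity) (sub_one_div_log_natCast_nonneg n)

lemma powWeight_monotone (k : ℕ) : Monotone (powWeight k) := by
  intro m n hmn
  rcases lt_or_ge 1 m with hm | hm
  · exact mul_le_mul (by gcongr) (sub_one_div_log_le (by exact_mod_cast hm) (by exact_mod_cast hmn))
      (sub_one_div_log_natCast_nonneg m) (by positivity)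
  · have hm0 : powWeight k m = 0 := by interval_cases m <;> simp [powWeight]
    exact hm0.trans_le (powWeight_nonneg k n)

lemma powWeight_le_mul_powWeight (k : ℕ) {m n : ℕ} (hm : 1 < m) (hmn : m ≤ n) (hnm : n ≤ 2 * m) :
    powWeight k n ≤ 2 ^ (k + 2) * powWeight k m := by
  have hm' : (2 : ℝ) ≤ m := by exact_mod_cast hm
  have hmn' : (m : ℝ) ≤ n := by exact_mod_cast hmn
  have hnm' : (n : ℝ) ≤ 2 * m := by exact_mod_cast hnm
  have hlog : 0 < Real.log m := Real.log_pos (by linarith)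
  calc powWeight k n ≤ (2 * m : ℝ) ^ k * (4 * (m - 1) / Real.log m) := by
        unfold powWeight
        gcongr
        · exact sub_one_div_log_natCast_nonneg n
        · linarith
        · linarith
    _ = 2 ^ (k + 2) * powWeight k m := by unfold powWeight; ring

lemma isRegularWeight_powWeight (k : ℕ) : IsRegularWeight (powWeight k) where
  nonneg := powWeight_nonneg k
  monotone := powWeight_monotone k
  exists_pos := ⟨2, mul_pos (by positivity) (div_pos (by norm_num) (Real.log_pos (by norm_num)))⟩
  mul_isBigO := by
    refine IsBigO.of_bound (2 * 2 ^ (k + 2)) ?_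
    filter_upwards [eventually_ge_atTop 3] with N hN
    rw [Real.norm_of_nonneg (mul_nonneg N.cast_nonneg (powWeight_nonneg k N)),
      Real.norm_of_nonneg (sum_nonneg fun n _ => powWeight_nonneg k n)]
    have hcard : (N : ℝ) ≤ 2 * ((N + 1 - (N - N / 2) : ℕ) : ℝ) := by
      exact_mod_cast (by omega : N ≤ 2 * (N + 1 - (N - N / 2)))
    calc N * powWeight k N
        ≤ (2 * ((N + 1 - (N - N / 2) : ℕ) : ℝ)) *
            (2 ^ (k + 2) * powWeight k (N - N / 2)) :=
          mul_le_mul hcard (powWeight_le_mul_powWeight k (by omega) (by omega) (by omega))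
            (powWeight_nonneg k N) (by positivity)
      _ = 2 * 2 ^ (k + 2) * (#(Ico (N - N / 2) (N + 1)) • powWeight k (N - N / 2)) := by
          rw [Nat.card_Ico, nsmul_eq_mul]; ring
      _ ≤ 2 * 2 ^ (k + 2) * ∑ n ∈ Ico (N - N / 2) (N + 1), powWeight k n := by
          gcongr
          exact card_nsmul_le_sum _ _ _ fun n hn => powWeight_monotone k (mem_Ico.1 hn).1
      _ ≤ 2 * 2 ^ (k + 2) * ∑ n ∈ range (N + 1), powWeight k n := by
          gcongr 2 * 2 ^ (k + 2) * ?_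
          exact sum_le_sum_of_subset_of_nonneg (fun n hn => mem_range.2 (mem_Ico.1 hn).2)
            fun n _ _ => powWeight_nonneg k n

end RegularWeight

section Tail

open Finset Asymptotics

/-- The sum of `1 / l` over the prime factors `l > Y` of `p - 1`. It bounds the error made in
`φ(p - 1) / (p - 1)` by ignoring these prime factors. -/
noncomputable def tailSum (Y p : ℕ) : ℝ := ∑ l ∈ (p - 1).primeFactors with Y < l, (l : ℝ)⁻¹

lemma tailSum_nonneg (Y p : ℕ) : 0 ≤ tailSum Y p := sum_nonneg fun _ _ => by positivity

lemma card_primesLE_filter_dvd_sub_one_le_div (l N : ℕ) :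
    #{p ∈ N.primesLE | l ∣ p - 1} ≤ N / l := by
  rw [← Nat.Ioc_filter_dvd_card_eq_div]
  refine card_le_card_of_injOn (· - 1) (fun p hp => ?_) fun p hp q hq hpq => ?_
  · obtain ⟨hpN, hlp⟩ := mem_filter.1 hp
    have hp1 := (Nat.prime_of_mem_primesLE hpN).one_lt
    have hpN' := Nat.le_of_mem_primesLE hpN
    exact mem_filter.2 ⟨mem_Ioc.2 ⟨by grind, by grind⟩, hlp⟩
  · have hp1 := (Nat.prime_of_mem_primesLE (mem_filter.1 hp).1).one_lt
    have hq1 := (Nat.prime_of_mem_primesLE (mem_filter.1 hq).1).one_lt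
    grind

/-- A Brun–Titchmarsh bound for the class `1`, weaker than the usual one by a factor `log l`. -/
theorem card_primesLE_filter_dvd_sub_one_mul_log_le {l : ℕ} (hl : l.Prime) (N : ℕ) :
    #{p ∈ N.primesLE | l ∣ p - 1} * Real.log N ≤ 60 * (N / l) * Real.log l := by
  rcases le_or_gt (l * l) N with hN | hN
  · exact card_primesLE_filter_dvd_sub_one_mul_log_le_of_mul_self_le hl hN
  · have hcard : (#{p ∈ N.primesLE | l ∣ p - 1} : ℝ) ≤ N / l :=
      (Nat.cast_le.2 (card_primesLE_filter_dvd_sub_one_le_div l N)).trans Nat.cast_div_le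
    have hlog : Real.log N ≤ 2 * Real.log l := by
      rcases N.eq_zero_or_pos with rfl | hN0
      · simpa using Real.log_natCast_nonneg l
      · rw [← Nat.cast_ofNat, ← Real.log_pow]
        exact Real.log_le_log (by exact_mod_cast hN0) (by exact_mod_cast (by nlinarith : N ≤ l ^ 2))
    have hnonneg : 0 ≤ (N / l : ℝ) * Real.log l :=
      mul_nonneg (by positivity) (Real.log_natCast_nonneg l)
    calc #{p ∈ N.primesLE | l ∣ p - 1} * Real.log N ≤ (N / l) * (2 * Real.log l) := by
          gcongr
      _ ≤ 60 * (N / l) * Real.log l := by linarith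

lemma summable_log_div_sq : Summable fun n : ℕ => Real.log n / (n : ℝ) ^ 2 := by
  refine summable_of_isBigO_nat (Real.summable_one_div_nat_rpow.2 (by norm_num : 1 < (3 / 2 : ℝ)))
    (((((isLittleO_log_rpow_atTop (by norm_num : 0 < (1 / 2 : ℝ))).isBigO.comp_tendsto
      tendsto_natCast_atTop_atTop)).mul (isBigO_refl (fun n : ℕ => ((n : ℝ) ^ 2)⁻¹) atTop)).trans
      (EventuallyEq.isBigO ?_))
  filter_upwards [eventually_gt_atTop 0] with n hn
  have hn' : (0 : ℝ) < n := by exact_mod_cast hn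
  rw [Function.comp_apply, ← Real.rpow_natCast, ← Real.rpow_neg hn'.le, ← Real.rpow_add hn',
    one_div ((n : ℝ) ^ _), ← Real.rpow_neg hn'.le]
  norm_num

lemma sum_tailSum (Y N : ℕ) :
    ∑ p ∈ N.primesLE, tailSum Y p =
      ∑ l ∈ N.primesLE with Y < l, #{p ∈ N.primesLE | l ∣ p - 1} * (l : ℝ)⁻¹ := by
  simp only [tailSum, ← nsmul_eq_mul, ← sum_const]
  refine sum_comm' fun p l => ?_
  simp only [mem_filter, Nat.mem_primesLE, Nat.mem_primeFactors]
  constructor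
  · rintro ⟨⟨hpN, hp⟩, ⟨hl, hlp, hp1⟩, hYl⟩
    have := Nat.le_of_dvd (Nat.pos_of_ne_zero hp1) hlp
    exact ⟨⟨⟨hpN, hp⟩, hlp⟩, ⟨by omega, hl⟩, hYl⟩
  · rintro ⟨⟨⟨hpN, hp⟩, hlp⟩, ⟨-, hl⟩, hYl⟩
    exact ⟨⟨hpN, hp⟩, ⟨hl, hlp, Nat.sub_ne_zero_of_lt hp.one_lt⟩, hYl⟩

lemma sum_tailSum_mul_log_le (Y N : ℕ) :
    (∑ p ∈ N.primesLE, tailSum Y p) * Real.log N ≤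
      60 * N * ∑ l ∈ N.primesLE with Y < l, Real.log l / (l : ℝ) ^ 2 := by
  rw [sum_tailSum, sum_mul, mul_sum]
  refine sum_le_sum fun l hl => ?_
  calc #{p ∈ N.primesLE | l ∣ p - 1} * (l : ℝ)⁻¹ * Real.log N
      = #{p ∈ N.primesLE | l ∣ p - 1} * Real.log N * (l : ℝ)⁻¹ := by ring
    _ ≤ 60 * (N / l) * Real.log l * (l : ℝ)⁻¹ :=
        mul_le_mul_of_nonneg_right (card_primesLE_filter_dvd_sub_one_mul_log_le
          (Nat.prime_of_mem_primesLE (mem_filter.1 hl).1) N) (by positivity)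
    _ = 60 * N * (Real.log l / (l : ℝ) ^ 2) := by ring

variable {f : ℕ → ℝ}

lemma IsRegularWeight.sum_tailSum_mul_le (hf : IsRegularWeight f) (Y N : ℕ) :
    ∑ p ∈ N.primesLE, tailSum Y p * (Real.log p * f p) ≤
      60 * (∑ l ∈ N.primesLE with Y < l, Real.log l / (l : ℝ) ^ 2) * (N * f N) := by
  calc ∑ p ∈ N.primesLE, tailSum Y p * (Real.log p * f p)
      ≤ ∑ p ∈ N.primesLE, tailSum Y p * (Real.log N * f N) := by
        refine sum_le_sum fun p hp => mul_le_mul_of_nonneg_left ?_ (tailSum_nonneg Y p)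
        have hpN := Nat.le_of_mem_primesLE hp
        have hp0 : (0 : ℝ) < p := by exact_mod_cast (Nat.prime_of_mem_primesLE hp).pos
        exact mul_le_mul (Real.log_le_log hp0 (by exact_mod_cast hpN)) (hf.monotone hpN)
          (hf.nonneg p) (Real.log_natCast_nonneg N)
    _ = (∑ p ∈ N.primesLE, tailSum Y p) * Real.log N * f N := by rw [← sum_mul, mul_assoc]
    _ ≤ 60 * N * (∑ l ∈ N.primesLE with Y < l, Real.log l / (l : ℝ) ^ 2) * f N :=
        mul_le_mul_of_nonneg_right (sum_tailSum_mul_log_le Y N) (hf.nonneg N)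
    _ = _ := by ring

lemma IsRegularWeight.exists_sum_tailSum_mul_le (hf : IsRegularWeight f) {ε : ℝ} (hε : 0 < ε) :
    ∃ Y₀, ∀ Y ≥ Y₀, ∀ᶠ N : ℕ in atTop,
      ∑ p ∈ N.primesLE, tailSum Y p * (Real.log p * f p) ≤ ε * ∑ n ∈ range (N + 1), f n := by
  obtain ⟨C, hC, hbound⟩ := hf.mul_isBigO.exists_pos
  obtain ⟨s, hs⟩ := summable_iff_vanishing_norm.1 summable_log_div_sq (ε / (60 * C)) (by positivity)
  refine ⟨s.sup id, fun Y hY => ?_⟩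
  filter_upwards [hbound.bound] with N hN
  rw [Real.norm_of_nonneg (mul_nonneg N.cast_nonneg (hf.nonneg N)),
    Real.norm_of_nonneg (sum_nonneg fun n _ => hf.nonneg n)] at hN
  have htail : ∑ l ∈ N.primesLE with Y < l, Real.log l / (l : ℝ) ^ 2 ≤ ε / (60 * C) := by
    refine (Real.le_norm_self _).trans (hs _ (disjoint_left.2 fun l hl hls => ?_)).le
    exact absurd ((le_sup (f := id) hls).trans hY) (mem_filter.1 hl).2.not_ge
  calc ∑ p ∈ N.primesLE, tailSum Y p * (Real.log p * f p)
      ≤ 60 * (∑ l ∈ N.primesLE with Y < l, Real.log l / (l : ℝ) ^ 2) * (N * f N) :=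
        hf.sum_tailSum_mul_le Y N
    _ ≤ 60 * (ε / (60 * C)) * (C * ∑ n ∈ range (N + 1), f n) :=
        mul_le_mul (by gcongr) hN (mul_nonneg N.cast_nonneg (hf.nonneg N)) (by positivity)
    _ = ε * ∑ n ∈ range (N + 1), f n := by field_simp

theorem IsRegularWeight.tendsto_sum_mul_div_of_approx (hf : IsRegularWeight f) {a : ℕ → ℝ}
    {b : ℕ → ℕ → ℝ} {c : ℕ → ℝ} {C : ℝ} (hb : ∀ᶠ Y in atTop, HasPrimeDensity (b Y) (c Y))
    (hc : Tendsto c atTop (nhds C))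
    (hab : ∀ᶠ Y in atTop, ∀ p, p.Prime → |a p - b Y p| ≤ tailSum Y p) :
    Tendsto (fun N : ℕ => (∑ p ∈ N.primesLE, a p * (Real.log p * f p)) /
      ∑ n ∈ range (N + 1), f n) atTop (nhds C) := by
  rw [Metric.tendsto_nhds]
  intro ε hε
  obtain ⟨Y₀, hY₀⟩ := hf.exists_sum_tailSum_mul_le (by positivity : 0 < ε / 3)
  obtain ⟨Y, hbY, hcY, habY, hY⟩ := (hb.and ((Metric.tendsto_nhds.1 hc (ε / 3)
    (by positivity)).and (hab.and (eventually_ge_atTop Y₀)))).exists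
  filter_upwards [Metric.tendsto_nhds.1 (hbY.tendsto_sum_mul_div hf) (ε / 3) (by positivity),
    hY₀ Y hY, hf.tendsto_sum_atTop.eventually_gt_atTop 0] with N hbN htail hpos
  have happrox : dist ((∑ p ∈ N.primesLE, a p * (Real.log p * f p)) / ∑ n ∈ range (N + 1), f n)
      ((∑ p ∈ N.primesLE, b Y p * (Real.log p * f p)) / ∑ n ∈ range (N + 1), f n) ≤ ε / 3 := by
    rw [Real.dist_eq, ← sub_div, ← sum_sub_distrib, abs_div, abs_of_pos hpos, div_le_iff₀ hpos]
    refine (abs_sum_le_sum_abs _ _).trans ((sum_le_sum fun p hp => ?_).trans htail)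
    have hw : 0 ≤ Real.log p * f p := mul_nonneg (Real.log_natCast_nonneg p) (hf.nonneg p)
    rw [← sub_mul, abs_mul, abs_of_nonneg hw]
    exact mul_le_mul_of_nonneg_right (habY p (Nat.prime_of_mem_primesLE hp)) hw
  linarith [dist_triangle4 ((∑ p ∈ N.primesLE, a p * (Real.log p * f p)) /
    ∑ n ∈ range (N + 1), f n) ((∑ p ∈ N.primesLE, b Y p * (Real.log p * f p)) /
    ∑ n ∈ range (N + 1), f n) (c Y) C]

end Tail

section JacobiSymbol

/-- The discriminant of `ℚ(√D)`, for `D ≠ 1` squarefree. -/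
def quadraticDiscr (D : ℤ) : ℤ := if D % 4 = 1 then D else 4 * D

lemma dvd_natCast_iff_of_squarefree {D : ℤ} (hD : Squarefree D) {n : ℕ} :
    D ∣ (n : ℤ) ↔ ∀ q ∈ D.natAbs.primeFactors, q ∣ n := by
  rw [Int.dvd_natCast]
  refine ⟨fun h q hq => (Nat.dvd_of_mem_primeFactors hq).trans h, fun h => ?_⟩
  rw [← Nat.prod_primeFactors_of_squarefree (Int.squarefree_natAbs.2 hD)]
  exact Finset.prod_primes_dvd _ (fun q hq => (Nat.prime_of_mem_primeFactors hq).prime) h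

lemma jacobiSym_eq_one_of_dvd_sub_one {D : ℤ} (hD : D % 4 = 1) {m : ℕ} (hm : Odd m)
    (hdvd : D ∣ (m : ℤ) - 1) : jacobiSym D m = 1 := by
  have hflip : jacobiSym m D.natAbs = 1 := by
    rw [jacobiSym.mod_left' (Int.modEq_iff_dvd.2 (Int.natAbs_dvd.2 hdvd)).symm, jacobiSym.one_left]
  rcases Int.natAbs_eq D with h | h
  · rw [h, jacobiSym.quadratic_reciprocity_one_mod_four (by omega) hm, hflip]
  · have hD3 : D.natAbs % 4 = 3 := by omega
    rw [h, jacobiSym.neg _ hm]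
    rcases Nat.odd_mod_four_iff.1 (Nat.odd_iff.1 hm) with hm4 | hm4
    · rw [ZMod.χ₄_nat_one_mod_four hm4, one_mul,
        jacobiSym.quadratic_reciprocity_one_mod_four' (Nat.odd_iff.2 (by omega)) hm4, hflip]
    · rw [ZMod.χ₄_nat_three_mod_four hm4,
        jacobiSym.quadratic_reciprocity_three_mod_four hD3 hm4, hflip]
      rfl

lemma jacobiSym_congr {D : ℤ} {a b : ℕ} (ha : Odd a) (hb : Odd b)
    (hab : a ≡ b [MOD 4 * D.natAbs]) : jacobiSym D a = jacobiSym D b := by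
  rw [jacobiSym.mod_right D ha, hab, ← jacobiSym.mod_right D hb]

lemma jacobiSym_eq_one_of_modEq_one {D : ℤ} {m : ℕ} (hm : Odd m)
    (h : m ≡ 1 [MOD 4 * D.natAbs]) : jacobiSym D m = 1 := by
  rw [jacobiSym_congr hm odd_one h, jacobiSym.one_right]

lemma jacobiSym_eq_one_of_quadraticDiscr_dvd {D : ℤ} {n m : ℕ} (hm : Odd m)
    (hdvd : quadraticDiscr D ∣ (n : ℤ)) (hmn : m ≡ 1 [MOD n]) : jacobiSym D m = 1 := by
  unfold quadraticDiscr at hdvd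
  split_ifs at hdvd with hD
  · exact jacobiSym_eq_one_of_dvd_sub_one hD hm (hdvd.trans hmn.symm.dvd)
  · exact jacobiSym_eq_one_of_modEq_one hm
      (hmn.of_dvd (by simpa [Int.natAbs_mul] using Int.natAbs_dvd_natAbs.2 hdvd))

lemma exists_jacobiSym_eq_neg_one_of_prime_dvd {D : ℤ} (hD : Squarefree D) {q n : ℕ}
    (hq : q.Prime) (hq2 : q ≠ 2) (hqD : (q : ℤ) ∣ D) (hqn : ¬ q ∣ n) :
    ∃ a : ℕ, Odd a ∧ a ≡ 1 [MOD n] ∧ jacobiSym D a = -1 := by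
  have := Fact.mk hq
  obtain ⟨r, rfl⟩ := hqD
  obtain ⟨b, hb⟩ := quadraticChar_exists_neg_one (F := ZMod q) (by rwa [ZMod.ringChar_zmod_n])
  have hqr : ¬ q ∣ r.natAbs := fun h => by
    have hunit := hD q (mul_dvd_mul_left _ (Int.natCast_dvd.2 h))
    exact hq.one_lt.ne' (by simpa using Int.isUnit_iff_natAbs_eq.1 hunit)
  have hq4 : ¬ q ∣ 4 := fun h =>
    hq2 ((Nat.prime_dvd_prime_iff_eq hq Nat.prime_two).1 (hq.dvd_of_dvd_pow (n := 2) h))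
  have hco : Nat.Coprime (4 * r.natAbs * n) q := by
    rw [Nat.coprime_comm, hq.coprime_iff_not_dvd, hq.dvd_mul, hq.dvd_mul]
    tauto
  obtain ⟨a, ha1, hab⟩ := Nat.chineseRemainder hco 1 b.val
  have ha4 : a % 4 = 1 := ha1.of_dvd ((Dvd.intro _ rfl).trans (Dvd.intro _ rfl))
  have ha : Odd a := Nat.odd_iff.2 (by omega)
  refine ⟨a, ha, ha1.of_dvd (Dvd.intro_left _ rfl), ?_⟩
  rw [jacobiSym.mul_left, jacobiSym_eq_one_of_modEq_one ha (ha1.of_dvd (Dvd.intro _ rfl)),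
    mul_one, jacobiSym.quadratic_reciprocity_one_mod_four' (hq.odd_of_ne_two hq2) ha4,
    ← jacobiSym.legendreSym.to_jacobiSym, legendreSym, Int.cast_natCast,
    (ZMod.natCast_eq_natCast_iff _ _ _).2 hab, ZMod.natCast_zmod_val, hb]

lemma gcd_prime_pow_succ_dvd {p : ℕ} (hp : p.Prime) {i n : ℕ} (h : ¬ p ^ (i + 1) ∣ n) :
    n.gcd (p ^ (i + 1)) ∣ p ^ i := by
  obtain ⟨j, hj, hgcd⟩ := (Nat.dvd_prime_pow hp).1 (n.gcd_dvd_right (p ^ (i + 1)))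
  have hji : j ≠ i + 1 := fun hji => h (hji ▸ hgcd ▸ n.gcd_dvd_left _)
  exact hgcd ▸ pow_dvd_pow p (by omega)

lemma exists_jacobiSym_eq_neg_one_of_emod_four_eq_three {D : ℤ} (hD : D % 4 = 3) {n : ℕ}
    (hDn : D ∣ (n : ℤ)) (hn : ¬ 4 ∣ n) :
    ∃ a : ℕ, Odd a ∧ a ≡ 1 [MOD n] ∧ jacobiSym D a = -1 := by
  have hgcd : n.gcd 4 ∣ 2 := gcd_prime_pow_succ_dvd (i := 1) Nat.prime_two hn
  obtain ⟨a, ha1, ha4⟩ :=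
    Nat.chineseRemainder' ((Nat.modEq_iff_dvd' (by norm_num : 1 ≤ 3)).2 hgcd)
  have ha : Odd a := Nat.odd_iff.2 (ha4.of_dvd (by norm_num : 2 ∣ 4))
  refine ⟨a, ha, ha1, ?_⟩
  rw [← neg_neg D, jacobiSym.neg _ ha, ZMod.χ₄_nat_three_mod_four ha4,
    jacobiSym_eq_one_of_dvd_sub_one (by omega) ha ((neg_dvd.2 hDn).trans ha1.symm.dvd)]
  rfl

lemma exists_jacobiSym_eq_neg_one_of_two_mul {s : ℤ} (hs : Odd s) {n : ℕ}
    (hsn : s ∣ (n : ℤ)) (hn : ¬ 8 ∣ n) :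
    ∃ a : ℕ, Odd a ∧ a ≡ 1 [MOD n] ∧ jacobiSym (2 * s) a = -1 := by
  have hgcd : n.gcd 8 ∣ 4 := gcd_prime_pow_succ_dvd (i := 2) Nat.prime_two hn
  obtain ⟨a, ha1, ha8⟩ :=
    Nat.chineseRemainder' ((Nat.modEq_iff_dvd' (by norm_num : 1 ≤ 5)).2 hgcd)
  have ha : Odd a := Nat.odd_iff.2 (ha8.of_dvd (by norm_num : 2 ∣ 8))
  have hs1 : a ≡ 1 [MOD 4 * s.natAbs] :=
    (Nat.modEq_and_modEq_iff_modEq_mul (Nat.Coprime.pow_left 2 (Nat.coprime_two_left.2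
      (Int.natAbs_odd.2 hs)))).1
        ⟨(ha8.of_dvd (by norm_num : 4 ∣ 8)).trans (by decide : 5 ≡ 1 [MOD 4]),
          ha1.of_dvd (Int.dvd_natCast.1 hsn)⟩
  refine ⟨a, ha, ha1, ?_⟩
  rw [← jacobiSym.even_odd (by simp) (Nat.odd_iff.1 ha), if_pos (.inr (show a % 8 = 5 from ha8)),
    Int.mul_ediv_cancel_left _ two_ne_zero, jacobiSym_eq_one_of_modEq_one ha hs1]

lemma exists_jacobiSym_eq_neg_one {D : ℤ} (hD : Squarefree D) {n : ℕ}
    (hdvd : ¬ quadraticDiscr D ∣ (n : ℤ)) :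
    ∃ a : ℕ, Odd a ∧ a ≡ 1 [MOD n] ∧ jacobiSym D a = -1 := by
  by_cases hex : ∃ q : ℕ, q.Prime ∧ q ≠ 2 ∧ (q : ℤ) ∣ D ∧ ¬ q ∣ n
  · obtain ⟨q, hq, hq2, hqD, hqn⟩ := hex
    exact exists_jacobiSym_eq_neg_one_of_prime_dvd hD hq hq2 hqD hqn
  push Not at hex
  have hodd : ∀ m : ℤ, Odd m → m ∣ D → m ∣ n := by
    intro m hm hmD
    refine (dvd_natCast_iff_of_squarefree (hD.squarefree_of_dvd hmD)).2 fun q hq => ?_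
    have hqm : (q : ℤ) ∣ m := Int.natCast_dvd.2 (Nat.dvd_of_mem_primeFactors hq)
    refine hex q (Nat.prime_of_mem_primeFactors hq) ?_ (hqm.trans hmD)
    rintro rfl
    exact Int.not_even_iff_odd.2 hm (even_iff_two_dvd.2 hqm)
  have hD4 : ¬ (4 : ℤ) ∣ D := fun h => absurd (hD 2 h) (by decide)
  unfold quadraticDiscr at hdvd
  obtain hD4 | hD4 | ⟨s, rfl⟩ : D % 4 = 1 ∨ D % 4 = 3 ∨ 2 ∣ D := by omega
  · rw [if_pos hD4] at hdvd
    exact absurd (hodd D (Int.odd_iff.2 (by omega)) dvd_rfl) hdvd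
  · have hDn := hodd D (Int.odd_iff.2 (by omega)) dvd_rfl
    refine exists_jacobiSym_eq_neg_one_of_emod_four_eq_three hD4 hDn fun h4 => hdvd ?_
    rw [if_neg (by omega)]
    exact IsCoprime.mul_dvd ((Int.isCoprime_two_left.2 (Int.odd_iff.2 (by omega))).pow_left
      (m := 2)) (by exact_mod_cast h4) hDn
  · have hs : Odd s := Int.odd_iff.2 (by omega)
    have hsn := hodd s hs (Dvd.intro_left _ rfl)
    refine exists_jacobiSym_eq_neg_one_of_two_mul hs hsn fun h8 => hdvd ?_
    rw [if_neg (by omega), ← mul_assoc]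
    exact IsCoprime.mul_dvd ((Int.isCoprime_two_left.2 hs).pow_left (m := 3))
      (by exact_mod_cast h8) hsn

end JacobiSymbol

section PeriodicDensity

lemma hasPrimeDensity_natCast_zmod {q : ℕ} [NeZero q] (F : ZMod q → ℝ) :
    HasPrimeDensity (fun p => F p) ((∑ u : (ZMod q)ˣ, F u) * (q.totient : ℝ)⁻¹) := by
  rw [Finset.sum_mul]
  refine (HasPrimeDensity.sum fun (u : (ZMod q)ˣ) _ =>
    (hasPrimeDensity_residueClass u.isUnit).const_mul (F u)).congr (m := q) fun p hp hqp => ?_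
  have hco : p.Coprime q :=
    hp.coprime_iff_not_dvd.2 fun h => (Nat.le_of_dvd (NeZero.pos q) h).not_gt hqp
  rw [Finset.sum_eq_single (ZMod.unitOfCoprime p hco)]
  · simp
  · intro u _ hu
    rw [if_neg fun h => hu (Units.ext (by simp [h])), mul_zero]
  · simp

/-- The Jacobi symbol `(D/m)` restricted to the `m` congruent to `1` modulo `n`. -/
def modOneJacobi (D : ℤ) (n m : ℕ) : ℝ := if m ≡ 1 [MOD n] then (jacobiSym D m : ℝ) else 0

variable {D : ℤ} {n a b : ℕ}

lemma modOneJacobi_congr (ha : Odd a) (hb : Odd b) (hab : a ≡ b [MOD 4 * D.natAbs * n]) :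
    modOneJacobi D n a = modOneJacobi D n b := by
  have hn : a ≡ b [MOD n] := hab.of_dvd (Dvd.intro_left _ rfl)
  have hiff : a ≡ 1 [MOD n] ↔ b ≡ 1 [MOD n] := ⟨hn.symm.trans, hn.trans⟩
  simp only [modOneJacobi, hiff, jacobiSym_congr ha hb (hab.of_dvd (Dvd.intro _ rfl))]

lemma modOneJacobi_mul (ha : Odd a) (han : a ≡ 1 [MOD n]) (hb : Odd b) :
    modOneJacobi D n (a * b) = jacobiSym D a * modOneJacobi D n b := by
  have hn : a * b ≡ b [MOD n] := by simpa using han.mul_right b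
  have hiff : a * b ≡ 1 [MOD n] ↔ b ≡ 1 [MOD n] := ⟨hn.symm.trans, hn.trans⟩
  simp only [modOneJacobi, hiff, jacobiSym.mul_right' D ha.pos.ne' hb.pos.ne', mul_ite, mul_zero,
    Int.cast_mul]

lemma coprime_of_jacobiSym_ne_zero (ha : Odd a) (han : a ≡ 1 [MOD n])
    (hJ : jacobiSym D a ≠ 0) : a.Coprime (4 * D.natAbs * n) := by
  refine .mul_right (.mul_right (.pow_right 2 (Nat.coprime_two_right.2 ha)) ?_) ?_
  · by_contra hco
    exact hJ (jacobiSym.eq_zero_iff.2 ⟨ha.pos.ne', fun h => hco (Nat.coprime_comm.1 h)⟩)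
  · simpa using han.gcd_eq

lemma sum_units_modOneJacobi_eq_zero [NeZero (4 * D.natAbs * n)] (ha : Odd a)
    (han : a ≡ 1 [MOD n]) (hJ : jacobiSym D a = -1) :
    ∑ u : (ZMod (4 * D.natAbs * n))ˣ, modOneJacobi D n (u : ZMod (4 * D.natAbs * n)).val = 0 := by
  have hodd (u : (ZMod (4 * D.natAbs * n))ˣ) : Odd (u : ZMod (4 * D.natAbs * n)).val :=
    Nat.coprime_two_right.1 ((ZMod.val_coe_unit_coprime u).coprime_dvd_right
      ⟨2 * D.natAbs * n, by ring⟩)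
  let v := ZMod.unitOfCoprime a
    (coprime_of_jacobiSym_ne_zero (D := D) ha han (by rw [hJ]; decide))
  have hneg (u : (ZMod (4 * D.natAbs * n))ˣ) :
      modOneJacobi D n ((v * u : (ZMod (4 * D.natAbs * n))ˣ) : ZMod (4 * D.natAbs * n)).val =
        -modOneJacobi D n (u : ZMod (4 * D.natAbs * n)).val := by
    rw [modOneJacobi_congr (hodd (v * u)) (ha.mul (hodd u)), modOneJacobi_mul ha han (hodd u), hJ,
      Int.cast_neg, Int.cast_one, neg_one_mul]
    rw [← ZMod.natCast_eq_natCast_iff]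
    simp [v]
  have hsum := Equiv.sum_comp (Equiv.mulLeft v) fun u : (ZMod (4 * D.natAbs * n))ˣ =>
    modOneJacobi D n (u : ZMod (4 * D.natAbs * n)).val
  simp only [Equiv.coe_mulLeft, hneg, Finset.sum_neg_distrib] at hsum
  linarith

lemma hasPrimeDensity_modOneJacobi_eq_zero (hD : D ≠ 0) (hn : n ≠ 0) (ha : Odd a)
    (han : a ≡ 1 [MOD n]) (hJ : jacobiSym D a = -1) : HasPrimeDensity (modOneJacobi D n) 0 := by
  have : NeZero (4 * D.natAbs * n) := ⟨by simp [hD, hn]⟩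
  have hdens := hasPrimeDensity_natCast_zmod fun x : ZMod (4 * D.natAbs * n) =>
    modOneJacobi D n x.val
  rw [sum_units_modOneJacobi_eq_zero ha han hJ, zero_mul] at hdens
  refine hdens.congr (m := 4 * D.natAbs * n) fun p hp hlt => ?_
  have h2 : 2 ∣ 4 * D.natAbs * n := ⟨2 * D.natAbs * n, by ring⟩
  have hodd : Odd p := hp.odd_of_ne_two
    (((Nat.le_of_dvd (NeZero.pos _) h2).trans_lt hlt).ne')
  rw [ZMod.val_natCast]
  refine modOneJacobi_congr (Nat.odd_iff.2 ?_) hodd (Nat.mod_modEq _ _)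
  rw [Nat.mod_mod_of_dvd _ h2, Nat.odd_iff.1 hodd]

lemma hasPrimeDensity_modEq_one (hn : n ≠ 0) :
    HasPrimeDensity (fun p => if p ≡ 1 [MOD n] then 1 else 0) (n.totient : ℝ)⁻¹ := by
  have : NeZero n := ⟨hn⟩
  simpa only [← ZMod.natCast_eq_natCast_iff, Nat.cast_one] using
    hasPrimeDensity_residueClass (q := n) isUnit_one

theorem hasPrimeDensity_modOneJacobi (hD : Squarefree D) (hn : n ≠ 0) :
    HasPrimeDensity (modOneJacobi D n)
      (if quadraticDiscr D ∣ (n : ℤ) then (n.totient : ℝ)⁻¹ else 0) := by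
  split_ifs with hdvd
  · refine (hasPrimeDensity_modEq_one hn).congr (m := 2) fun p hp hp2 => ?_
    unfold modOneJacobi
    split_ifs with hpn
    · rw [jacobiSym_eq_one_of_quadraticDiscr_dvd (hp.odd_of_ne_two hp2.ne') hdvd hpn, Int.cast_one]
    · rfl
  · obtain ⟨a, ha, han, hJ⟩ := exists_jacobiSym_eq_neg_one hD hdvd
    exact hasPrimeDensity_modOneJacobi_eq_zero hD.ne_zero hn ha han hJ

end PeriodicDensity

section SievedProduct

open Finset

/-- The product of `1 - c l` over the divisors of `n` lying in `T`: a multiplicative function of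
`n`, truncated to the primes in `T`. -/
noncomputable def sievedProd (c : ℕ → ℝ) (T : Finset ℕ) (n : ℕ) : ℝ := ∏ l ∈ T with l ∣ n, (1 - c l)

/-- The factor `∏_{l ∣ D} -c l / (l - 1 - c l)` by which correlation with the Jacobi symbol `(D/p)`
changes the mean value of a sieved product of `p - 1`. It vanishes unless `D` is itself the
discriminant of `ℚ(√D)`, because the discriminant is then divisible by `4`. -/
noncomputable def quadraticFactor (c : ℕ → ℝ) (D : ℤ) : ℝ :=
  if D % 4 = 1 then ∏ l ∈ D.natAbs.primeFactors, (-c l / (l - 1 - c l)) else 0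

lemma squarefree_prod_primes {S : Finset ℕ} (hS : ∀ l ∈ S, l.Prime) : Squarefree (∏ l ∈ S, l) :=
  squarefree_prod_of_pairwise_isCoprime
    (fun _ hp _ hq hpq =>
      Nat.coprime_iff_isRelPrime.1 ((Nat.coprime_primes (hS _ hp) (hS _ hq)).2 hpq))
    fun l hl => (hS l hl).prime.squarefree

lemma totient_prod_primes {S : Finset ℕ} (hS : ∀ l ∈ S, l.Prime) :
    ((∏ l ∈ S, l).totient : ℝ) = ∏ l ∈ S, ((l : ℝ) - 1) := by
  rw [Nat.totient_eq_div_primeFactors_mul, Nat.primeFactors_prod hS,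
    Nat.div_self (prod_pos fun l hl => (hS l hl).pos), one_mul, Nat.cast_prod]
  exact prod_congr rfl fun l hl => Nat.cast_pred (hS l hl).pos

lemma prod_primes_dvd_iff {S : Finset ℕ} (hS : ∀ l ∈ S, l.Prime) {n : ℕ} :
    ∏ l ∈ S, l ∣ n ↔ ∀ l ∈ S, l ∣ n :=
  ⟨fun h _ hl => (dvd_prod_of_mem _ hl).trans h, prod_primes_dvd n fun l hl => (hS l hl).prime⟩

lemma modEq_one_iff_dvd_sub_one {m n : ℕ} (hm : 1 ≤ m) : m ≡ 1 [MOD n] ↔ n ∣ m - 1 :=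
  Nat.ModEq.comm.trans (Nat.modEq_iff_dvd' hm)

lemma three_le_of_mem_primeFactors {D : ℤ} (hD : D % 4 = 1) {l : ℕ}
    (hl : l ∈ D.natAbs.primeFactors) : 3 ≤ l := by
  have hl2 := (Nat.prime_of_mem_primeFactors hl).two_le
  have hlD := Nat.dvd_of_mem_primeFactors hl
  have : l ≠ 2 := by rintro rfl; omega
  omega

variable {T : Finset ℕ} {D : ℤ}

lemma jacobiSym_mul_sievedProd (hT : ∀ l ∈ T, l.Prime) (c : ℕ → ℝ) (D : ℤ) {p : ℕ} (hp : 1 ≤ p) :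
    jacobiSym D p * sievedProd c T (p - 1) =
      ∑ S ∈ T.powerset, (∏ l ∈ S, -c l) * modOneJacobi D (∏ l ∈ S, l) p := by
  have hterm (l : ℕ) : (if l ∣ p - 1 then 1 - c l else 1) = 1 + if l ∣ p - 1 then -c l else 0 := by
    split_ifs <;> ring
  simp only [sievedProd, prod_filter, hterm, prod_one_add, mul_sum]
  refine sum_congr rfl fun S hS => ?_
  have hSp : ∀ l ∈ S, l.Prime := fun l hl => hT l (mem_powerset.1 hS hl)
  simp only [prod_ite_zero, modOneJacobi, modEq_one_iff_dvd_sub_one hp, prod_primes_dvd_iff hSp]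
  split_ifs <;> ring

lemma quadraticDiscr_dvd_prod_primes_iff (hT : ∀ l ∈ T, l.Prime) (hD : Squarefree D) :
    quadraticDiscr D ∣ ((∏ l ∈ T, l : ℕ) : ℤ) ↔ D % 4 = 1 ∧ D.natAbs.primeFactors ⊆ T := by
  unfold quadraticDiscr
  split_ifs with h4
  · rw [dvd_natCast_iff_of_squarefree hD, and_iff_right h4]
    refine forall₂_congr fun q hq => ⟨fun h => ?_, dvd_prod_of_mem _⟩
    have hqp := Nat.prime_of_mem_primeFactors hq
    obtain ⟨l, hl, hql⟩ := (hqp.prime.dvd_finsetProd_iff _).1 h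
    exact (Nat.prime_dvd_prime_iff_eq hqp (hT l hl)).1 hql ▸ hl
  · refine iff_of_false (fun h => ?_) fun h => h4 h.1
    have h22 : 2 * 2 ∣ ∏ l ∈ T, l := by exact_mod_cast (Dvd.intro D rfl : (4 : ℤ) ∣ 4 * D).trans h
    exact absurd (squarefree_prod_primes hT 2 h22) (by decide)

lemma sum_powerset_quadraticDiscr_dvd (hT : ∀ l ∈ T, l.Prime) (hD : Squarefree D) (c : ℕ → ℝ)
    (hDT : D.natAbs.primeFactors ⊆ T) (hc : ∀ l, c l ≤ 1) :
    ∑ S ∈ T.powerset, (∏ l ∈ S, -c l) *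
        (if quadraticDiscr D ∣ ((∏ l ∈ S, l : ℕ) : ℤ) then ((∏ l ∈ S, l).totient : ℝ)⁻¹ else 0) =
      (∏ l ∈ T, (1 - c l / (l - 1))) * quadraticFactor c D := by
  have hne : ∀ l ∈ T, (l : ℝ) - 1 ≠ 0 := fun l hl =>
    sub_ne_zero.2 (Nat.cast_ne_one.2 (hT l hl).one_lt.ne')
  have hST : ∀ S ∈ T.powerset, ∀ l ∈ S, l.Prime := fun S hS l hl => hT l (mem_powerset.1 hS hl)
  unfold quadraticFactor
  split_ifs with h4
  · have hfactor : ∀ l ∈ T, (1 - c l / (l - 1)) *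
        (if l ∈ D.natAbs.primeFactors then -c l / (l - 1 - c l) else 1) =
        -c l / (l - 1) + if l ∉ D.natAbs.primeFactors then 1 else 0 := by
      intro l hl
      by_cases hlD : l ∈ D.natAbs.primeFactors
      · have h3 : (3 : ℝ) ≤ l := by exact_mod_cast three_le_of_mem_primeFactors h4 hlD
        have hne' : (l : ℝ) - 1 - c l ≠ 0 := by linarith [hc l]
        have := hne l hl
        simp only [hlD, not_true, if_true, if_false]
        field_simp
        ring
      · simp only [hlD, not_false_eq_true, if_true, if_false]
        ring
    rw [← inter_eq_right.2 hDT, ← prod_ite_mem, ← prod_mul_distrib, prod_congr rfl hfactor,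
      prod_add]
    refine sum_congr rfl fun S hS => ?_
    have hiff : D.natAbs.primeFactors ⊆ S ↔ ∀ l ∈ T \ S, l ∉ D.natAbs.primeFactors := by
      grind
    rw [prod_ite_zero, prod_const_one]
    simp only [quadraticDiscr_dvd_prod_primes_iff (hST S hS) hD, h4, true_and, hiff,
      totient_prod_primes (hST S hS), mul_ite, mul_one, mul_zero, prod_div_distrib,
      ← div_eq_mul_inv]
  · rw [mul_zero]
    refine sum_eq_zero fun S hS => ?_
    rw [if_neg fun h => h4 ((quadraticDiscr_dvd_prod_primes_iff (hST S hS) hD).1 h).1, mul_zero]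

theorem hasPrimeDensity_jacobiSym_mul_sievedProd (hT : ∀ l ∈ T, l.Prime) (hD : Squarefree D)
    (c : ℕ → ℝ) (hDT : D.natAbs.primeFactors ⊆ T) (hc : ∀ l, c l ≤ 1) :
    HasPrimeDensity (fun p => jacobiSym D p * sievedProd c T (p - 1))
      ((∏ l ∈ T, (1 - c l / (l - 1))) * quadraticFactor c D) := by
  rw [← sum_powerset_quadraticDiscr_dvd hT hD c hDT hc]
  exact (HasPrimeDensity.sum fun S hS => (hasPrimeDensity_modOneJacobi hD (squarefree_prod_primes
    fun l hl => hT l (mem_powerset.1 hS hl)).ne_zero).const_mul (∏ l ∈ S, -c l)).congr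
    (m := 0) fun p _ hp => (jacobiSym_mul_sievedProd hT c D hp).symm

end SievedProduct

section MeanValue

open Finset

lemma jacobiSym_mul_sq {D m : ℤ} (hDm : D * m ^ 2 ≠ 0) {p : ℕ} (hp : p.Prime)
    (hlt : (D * m ^ 2).natAbs < p) :
    jacobiSym (D * m ^ 2) p = jacobiSym D p ∧ (jacobiSym D p = 1 ∨ jacobiSym D p = -1) := by
  have hco : IsCoprime (D * m ^ 2) p := by
    rw [Int.isCoprime_iff_gcd_eq_one, Int.gcd_comm]
    exact hp.coprime_iff_not_dvd.2
      (Nat.not_dvd_of_pos_of_lt (Int.natAbs_pos.2 hDm) hlt)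
  have hm : m.gcd p = 1 :=
    Int.isCoprime_iff_gcd_eq_one.1 ((IsCoprime.pow_left_iff two_pos).1 hco.of_mul_left_right)
  rw [jacobiSym.mul_left, jacobiSym.sq_one' hm, mul_one]
  exact ⟨rfl, jacobiSym.eq_one_or_neg_one (Int.isCoprime_iff_gcd_eq_one.1 hco.of_mul_left_left)⟩

@[simp]
lemma quadraticFactor_one (c : ℕ → ℝ) : quadraticFactor c 1 = 1 := by
  simp [quadraticFactor]

lemma hasPrimeDensity_nonresidue_sievedProd {D m : ℤ} (hD : Squarefree D) (hm : m ≠ 0)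
    {T : Finset ℕ} (hT : ∀ l ∈ T, l.Prime) (hDT : D.natAbs.primeFactors ⊆ T) {c : ℕ → ℝ}
    (hc : ∀ l, c l ≤ 1) :
    HasPrimeDensity
      (fun p => if jacobiSym (D * m ^ 2) p = -1 then sievedProd c T (p - 1) else 0)
      (2⁻¹ * (∏ l ∈ T, (1 - c l / (l - 1))) * (1 - quadraticFactor c D)) := by
  have hone := hasPrimeDensity_jacobiSym_mul_sievedProd hT squarefree_one c (by simp) hc
  have hquad := hasPrimeDensity_jacobiSym_mul_sievedProd hT hD c hDT hc
  convert ((hone.const_mul 2⁻¹).add (hquad.const_mul (-2⁻¹))).congr (m := (D * m ^ 2).natAbs)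
    fun p hp hlt => ?_ using 1
  · rw [quadraticFactor_one]
    ring
  · obtain ⟨hJ, h | h⟩ := jacobiSym_mul_sq (mul_ne_zero hD.ne_zero (pow_ne_zero 2 hm)) hp hlt
    · norm_num [hJ, h]
    · norm_num [hJ, h]
      ring

/-- Local weights `c l ∈ [0, 1]` whose associated multiplicative function
`n ↦ ∏_{l ∣ n} (1 - c l)` is, at the large primes, at least as close to `1` as `φ(n) / n`. -/
structure IsLocalWeight (c : ℕ → ℝ) : Prop where
  nonneg (l : ℕ) : 0 ≤ c l
  le_one (l : ℕ) : c l ≤ 1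
  eventually_le_inv : ∀ᶠ l : ℕ in atTop, c l ≤ (l : ℝ)⁻¹

lemma one_sub_sum_le_prod_one_sub {ι R : Type*} [CommRing R] [LinearOrder R] [IsStrictOrderedRing R]
    {s : Finset ι} {x : ι → R} (h0 : ∀ i ∈ s, 0 ≤ x i) (h1 : ∀ i ∈ s, x i ≤ 1) :
    1 - ∑ i ∈ s, x i ≤ ∏ i ∈ s, (1 - x i) := by
  induction s using Finset.cons_induction with
  | empty => simp
  | cons i s hi ih =>
    rw [forall_mem_cons] at h0 h1
    rw [sum_cons, prod_cons]
    nlinarith [ih h0.2 h1.2, h0.1, h1.1, sum_nonneg h0.2]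

lemma sievedProd_primesLE (c : ℕ → ℝ) {n : ℕ} (hn : n ≠ 0) (Y : ℕ) :
    sievedProd c Y.primesLE n = ∏ l ∈ n.primeFactors with ¬ Y < l, (1 - c l) := by
  refine prod_congr ?_ fun _ _ => rfl
  ext l
  simp only [mem_filter, Nat.mem_primesLE, Nat.mem_primeFactors, not_lt]
  tauto

lemma IsLocalWeight.eventually_abs_prod_sub_sievedProd_le {c : ℕ → ℝ} (hc : IsLocalWeight c) :
    ∀ᶠ Y in atTop, ∀ n ≠ 0, |∏ l ∈ n.primeFactors, (1 - c l) - sievedProd c (Nat.primesLE Y) n| ≤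
      ∑ l ∈ n.primeFactors with Y < l, (l : ℝ)⁻¹ := by
  obtain ⟨Y₀, hY₀⟩ := eventually_atTop.1 hc.eventually_le_inv
  filter_upwards [eventually_ge_atTop Y₀] with Y hY n hn
  have hprod (s : Finset ℕ) : 0 ≤ ∏ l ∈ s, (1 - c l) ∧ ∏ l ∈ s, (1 - c l) ≤ 1 :=
    ⟨prod_nonneg fun l _ => sub_nonneg.2 (hc.le_one l),
      prod_le_one (fun l _ => sub_nonneg.2 (hc.le_one l)) fun l _ => sub_le_self _ (hc.nonneg l)⟩
  have htail : ∑ l ∈ n.primeFactors with Y < l, c l ≤ ∑ l ∈ n.primeFactors with Y < l, (l : ℝ)⁻¹ :=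
    sum_le_sum fun l hl => hY₀ l (hY.trans (mem_filter.1 hl).2.le)
  have hlow := one_sub_sum_le_prod_one_sub (s := {l ∈ n.primeFactors | Y < l})
    (fun l _ => hc.nonneg l) fun l _ => hc.le_one l
  obtain ⟨hA0, hA1⟩ := hprod {l ∈ n.primeFactors | ¬ Y < l}
  obtain ⟨-, hB1⟩ := hprod {l ∈ n.primeFactors | Y < l}
  rw [sievedProd_primesLE c hn, ← prod_filter_mul_prod_filter_not n.primeFactors (Y < ·), abs_le]
  constructor <;> nlinarith

lemma IsLocalWeight.multipliable {c : ℕ → ℝ} (hc : IsLocalWeight c) :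
    Multipliable fun p : Nat.Primes => 1 - c p / (p - 1) := by
  have hsum : Summable fun n : ℕ => 2 / (n : ℝ) ^ 2 := by
    simpa only [mul_one_div] using (Real.summable_one_div_nat_pow.2 one_lt_two).mul_left 2
  have hbound : ∀ᶠ p : Nat.Primes in cofinite, ‖-(c p / (p - 1))‖ ≤ 2 / (p : ℝ) ^ 2 := by
    have htop : Tendsto (fun p : Nat.Primes => (p : ℕ)) cofinite atTop :=
      Nat.cofinite_eq_atTop ▸ Subtype.coe_injective.tendsto_cofinite
    filter_upwards [htop.eventually hc.eventually_le_inv] with p hp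
    have h2 : (2 : ℝ) ≤ p := by exact_mod_cast p.2.two_le
    have h1 : (0 : ℝ) < p - 1 := by linarith
    rw [norm_neg, Real.norm_of_nonneg (div_nonneg (hc.nonneg _) h1.le)]
    calc c p / (p - 1) ≤ (p : ℝ)⁻¹ / (p - 1) := by gcongr
      _ ≤ (p : ℝ)⁻¹ / (p / 2) := by gcongr; linarith
      _ = 2 / (p : ℝ) ^ 2 := by field_simp
  have hsummable : Summable fun p : Nat.Primes => -(c p / (p - 1)) :=
    (hsum.comp_injective Subtype.coe_injective).of_norm_bounded_eventually hbound
  simpa only [sub_eq_add_neg] using Real.multipliable_one_add_of_summable hsummable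

lemma tendsto_prod_primesLE {f : ℕ → ℝ} (hf : Multipliable fun p : Nat.Primes => f p) :
    Tendsto (fun Y : ℕ => ∏ p ∈ Y.primesLE, f p) atTop (nhds (∏' p : Nat.Primes, f p)) := by
  have h := ((Nat.Primes.hasProd_iff_hasProd_ite f).1 hf.hasProd).tendsto_prod_nat
  simpa only [Function.comp_def, Nat.primesLE_eq_filter_range, prod_filter] using
    h.comp (tendsto_add_atTop_nat 1)

/-- The mean value of `∏_{l ∣ p - 1} (1 - c l)` over the primes `p` with `(D/p) = -1`, where the
primes with `(D/p) ≠ -1` are counted with value `0`. -/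
noncomputable def nonresidueMean (c : ℕ → ℝ) (D : ℤ) : ℝ :=
  2⁻¹ * (∏' p : Nat.Primes, (1 - c p / (p - 1))) * (1 - quadraticFactor c D)

theorem IsLocalWeight.tendsto_sum_nonresidue {c : ℕ → ℝ} (hc : IsLocalWeight c) {D m : ℤ}
    (hD : Squarefree D) (hm : m ≠ 0) {f : ℕ → ℝ} (hf : IsRegularWeight f) :
    Tendsto (fun N => (∑ p ∈ N.primesLE, (if jacobiSym (D * m ^ 2) p = -1 then
        ∏ l ∈ (p - 1).primeFactors, (1 - c l) else 0) * (Real.log p * f p)) /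
          ∑ n ∈ range (N + 1), f n) atTop (nhds (nonresidueMean c D)) := by
  have hmean := ((tendsto_prod_primesLE (f := fun l => 1 - c l / (l - 1))
    hc.multipliable).const_mul 2⁻¹).mul_const (1 - quadraticFactor c D)
  refine hf.tendsto_sum_mul_div_of_approx (b := fun Y p =>
    if jacobiSym (D * m ^ 2) p = -1 then sievedProd c Y.primesLE (p - 1) else 0) ?_ hmean ?_
  · filter_upwards [eventually_ge_atTop D.natAbs] with Y hY
    refine hasPrimeDensity_nonresidue_sievedProd hD hm (fun l => Nat.prime_of_mem_primesLE)
      (fun l hl => ?_) hc.le_one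
    exact Nat.mem_primesLE.2 ⟨(Nat.le_of_mem_primeFactors hl).trans hY,
      Nat.prime_of_mem_primeFactors hl⟩
  · filter_upwards [hc.eventually_abs_prod_sub_sievedProd_le] with Y hY p hp
    split_ifs
    · exact hY (p - 1) (Nat.sub_ne_zero_of_lt hp.one_lt)
    · rw [sub_zero, abs_zero]
      exact tailSum_nonneg Y p

end MeanValue

section CoprimeWeight

open Finset

/-- The local weight `x`, changed to `1` at the primes dividing `h`: the associated multiplicative
function is the one of `x`, restricted to the integers coprime to `h`. -/
noncomputable def coprimeWeight (h : ℕ) (x : ℕ → ℝ) (l : ℕ) : ℝ := if l ∣ h then 1 else x l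

/-- The factor `Ã_d` of the limit, accounting for the correlation between the quadratic character
of discriminant `d` and the totient of `p - 1`. -/
noncomputable def discrFactor (h : ℕ) (d : ℤ) : ℝ :=
  if d ∣ (h : ℤ) then 1 else
    1 - (ArithmeticFunction.moebius d.natAbs : ℝ) *
      (∏ q ∈ d.natAbs.primeFactors.filter (fun q => q ∣ h), (1 / ((q : ℝ) - 2))) *
      (∏ q ∈ d.natAbs.primeFactors.filter (fun q => ¬ q ∣ h), (1 / ((q : ℝ) ^ 2 - q - 1)))

lemma IsLocalWeight.ite_dvd {x : ℕ → ℝ} (hx : IsLocalWeight x) {h : ℕ} (hh : h ≠ 0) {a : ℝ}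
    (ha0 : 0 ≤ a) (ha1 : a ≤ 1) : IsLocalWeight fun l => if l ∣ h then a else x l where
  nonneg l := ite_nonneg ha0 (hx.nonneg l)
  le_one l := ite_le_one ha1 (hx.le_one l)
  eventually_le_inv := by
    filter_upwards [hx.eventually_le_inv, eventually_gt_atTop h] with l hl hlt
    rwa [if_neg (Nat.not_dvd_of_pos_of_lt hh.bot_lt hlt)]

lemma isLocalWeight_inv : IsLocalWeight fun l => (l : ℝ)⁻¹ where
  nonneg _ := by positivity
  le_one l := Nat.cast_inv_le_one l
  eventually_le_inv := .of_forall fun _ => le_rfl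

lemma isLocalWeight_zero : IsLocalWeight 0 where
  nonneg _ := le_rfl
  le_one _ := zero_le_one
  eventually_le_inv := .of_forall fun l => by simp

lemma IsLocalWeight.coprimeWeight {x : ℕ → ℝ} (hx : IsLocalWeight x) {h : ℕ} (hh : h ≠ 0) :
    IsLocalWeight (coprimeWeight h x) :=
  hx.ite_dvd hh zero_le_one le_rfl

lemma prod_one_sub_coprimeWeight (h : ℕ) (x : ℕ → ℝ) {n : ℕ} (hn : n ≠ 0) :
    ∏ l ∈ n.primeFactors, (1 - coprimeWeight h x l) =
      if n.gcd h = 1 then ∏ l ∈ n.primeFactors, (1 - x l) else 0 := by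
  split_ifs with hco
  · refine prod_congr rfl fun l hl => ?_
    rw [coprimeWeight, if_neg fun hlh => (Nat.prime_of_mem_primeFactors hl).ne_one <|
      Nat.eq_one_of_dvd_coprimes hco (Nat.dvd_of_mem_primeFactors hl) hlh]
  · obtain ⟨l, hl, hln, hlh⟩ := Nat.Prime.not_coprime_iff_dvd.1 hco
    refine prod_eq_zero (Nat.mem_primeFactors.2 ⟨hl, hln, hn⟩) ?_
    rw [coprimeWeight, if_pos hlh, sub_self]

lemma cast_totient (n : ℕ) : (n.totient : ℝ) = n * ∏ l ∈ n.primeFactors, (1 - (l : ℝ)⁻¹) := by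
  simpa using congrArg (Rat.cast : ℚ → ℝ) n.totient_eq_mul_prod_factors

lemma tprod_coprimeWeight_inv {h : ℕ} (hh : h ≠ 0) :
    ∏' p : Nat.Primes, (1 - coprimeWeight h (fun l => (l : ℝ)⁻¹) p / (p - 1)) =
      (∏' p : Nat.Primes, (1 - coprimeWeight h 0 p / (p - 1))) *
        ∏' p : Nat.Primes, if (p : ℕ) ∣ h then (1 : ℝ) else
          1 - 1 / (((p : ℕ) : ℝ) * (((p : ℕ) : ℝ) - 1)) := by
  have hmult : Multipliable fun p : Nat.Primes => if (p : ℕ) ∣ h then (1 : ℝ) else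
      1 - 1 / (((p : ℕ) : ℝ) * (((p : ℕ) : ℝ) - 1)) := by
    convert (isLocalWeight_inv.ite_dvd hh le_rfl zero_le_one).multipliable using 2 with p
    split_ifs <;> simp [div_eq_mul_inv, mul_comm]
  rw [← (isLocalWeight_zero.coprimeWeight hh).multipliable.tprod_mul hmult]
  refine tprod_congr fun p => ?_
  simp only [coprimeWeight]
  split_ifs <;> simp [div_eq_mul_inv, mul_comm]

lemma tprod_coprimeWeight_zero_ne_zero {h : ℕ} (hh : Odd h) :
    ∏' p : Nat.Primes, (1 - coprimeWeight h 0 p / (p - 1)) ≠ 0 := by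
  have hfin : Function.HasFiniteMulSupport
      fun p : Nat.Primes => 1 - coprimeWeight h 0 p / ((p : ℝ) - 1) := by
    refine ((finite_toSet h.divisors).preimage Subtype.coe_injective.injOn).subset fun p hp => ?_
    refine Nat.mem_divisors.2 ⟨?_, hh.pos.ne'⟩
    by_contra hph
    exact hp (by simp [coprimeWeight, hph])
  rw [tprod_eq_finprod hfin]
  refine finprod_ne_zero fun p => ?_
  simp only [coprimeWeight]
  split_ifs with hph
  · have hp2 : (p : ℕ) ≠ 2 := fun hp2 => hh.not_two_dvd_nat (hp2 ▸ hph)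
    have : (2 : ℝ) < p := by exact_mod_cast p.2.two_le.lt_of_ne' hp2
    rw [sub_ne_zero]
    exact (div_lt_one (by linarith) |>.2 (by linarith)).ne'
  · simp

lemma abs_neg_div_sub_one_sub_le {a t : ℝ} (ha0 : 0 ≤ a) (ha1 : a ≤ 1) (ht : 2 < t) :
    |-a / (t - 1 - a)| ≤ 1 / (t - 2) := by
  rw [abs_div, abs_neg, abs_of_nonneg ha0, abs_of_pos (by linarith)]
  exact div_le_div₀ zero_le_one ha1 (by linarith) (by linarith)

lemma quadraticFactor_ne_one {c : ℕ → ℝ} (hc : IsLocalWeight c) {D : ℤ} (hD : D ≠ 1) :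
    quadraticFactor c D ≠ 1 := by
  rw [quadraticFactor]
  split_ifs with hD4
  swap
  · exact zero_ne_one
  have hfactor (l : ℕ) (hl : l ∈ D.natAbs.primeFactors) :
      |-c l / (l - 1 - c l)| ≤ 1 / (l - 2) ∧ (3 : ℝ) ≤ l := by
    have h3 : (3 : ℝ) ≤ l := by exact_mod_cast three_le_of_mem_primeFactors hD4 hl
    exact ⟨abs_neg_div_sub_one_sub_le (hc.nonneg l) (hc.le_one l) (by linarith), h3⟩
  -- The prime `3` alone contributes a nonpositive factor, a larger prime one less than `1` in size.
  by_cases hall : ∀ l ∈ D.natAbs.primeFactors, l = 3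
  · have hne : D.natAbs.primeFactors.Nonempty := Nat.nonempty_primeFactors.2 (by omega)
    rw [eq_singleton_iff_nonempty_unique_mem.2 ⟨hne, hall⟩, prod_singleton]
    have h0 := hc.nonneg 3
    have h1 := hc.le_one 3
    refine ((div_nonpos_of_nonpos_of_nonneg (neg_nonpos.2 h0) ?_).trans_lt one_pos).ne
    norm_num
    linarith
  · push Not at hall
    obtain ⟨l, hl, hl3⟩ := hall
    obtain ⟨hle, h3⟩ := hfactor l hl
    have hlt : (3 : ℝ) < l := h3.lt_of_ne' (by exact_mod_cast hl3)
    refine ne_of_apply_ne abs (ne_of_lt ?_)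
    rw [← mul_prod_erase _ _ hl, abs_mul, abs_prod, abs_one]
    refine mul_lt_one_of_nonneg_of_lt_one_left (abs_nonneg _) (hle.trans_lt ?_)
      (prod_le_one (fun _ _ => abs_nonneg _) fun q hq => ?_)
    · exact (div_lt_one (by linarith)).2 (by linarith)
    · obtain ⟨hqle, hq3⟩ := hfactor q (mem_of_mem_erase hq)
      exact hqle.trans ((div_le_one (by linarith)).2 (by linarith))

lemma quadraticFactor_coprimeWeight_inv (h : ℕ) {D : ℤ} (hD : Squarefree D)
    (hD4 : D % 4 = 1) :
    quadraticFactor (coprimeWeight h fun l => (l : ℝ)⁻¹) D =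
      ArithmeticFunction.moebius D.natAbs *
        (∏ q ∈ D.natAbs.primeFactors with q ∣ h, (1 / ((q : ℝ) - 2))) *
        ∏ q ∈ D.natAbs.primeFactors with ¬ q ∣ h, (1 / ((q : ℝ) ^ 2 - q - 1)) := by
  rw [quadraticFactor, if_pos hD4,
    ← ArithmeticFunction.isMultiplicative_moebius.prod_primeFactors (Int.squarefree_natAbs.2 hD),
    Int.cast_prod, prod_filter, prod_filter, mul_assoc, ← prod_mul_distrib, ← prod_mul_distrib]
  refine prod_congr rfl fun l hl => ?_
  have hl0 : (l : ℝ) ≠ 0 := by exact_mod_cast (Nat.prime_of_mem_primeFactors hl).ne_zero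
  rw [ArithmeticFunction.moebius_apply_prime (Nat.prime_of_mem_primeFactors hl), coprimeWeight]
  split_ifs
  · norm_num [sub_sub, neg_div]
  · have hden : (l : ℝ) - 1 - (l : ℝ)⁻¹ = (l ^ 2 - l - 1) / l := by field_simp
    rw [hden, neg_div, ← one_div, div_div_div_cancel_right₀ hl0]
    simp

lemma one_sub_quadraticFactor_coprimeWeight_inv {h : ℕ} (hh : Odd h) {D : ℤ} (hD : Squarefree D) :
    1 - quadraticFactor (coprimeWeight h fun l => (l : ℝ)⁻¹) D =
      (1 - quadraticFactor (coprimeWeight h 0) D) * discrFactor h (quadraticDiscr D) := by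
  by_cases hD4 : D % 4 = 1
  swap
  · have hdvd : ¬ 4 * D ∣ (h : ℤ) := fun hdvd => by
      have := hh.not_two_dvd_nat
      have := (Dvd.intro _ rfl : (4 : ℤ) ∣ 4 * D).trans hdvd
      omega
    have hsq : ¬ Squarefree (4 * D).natAbs := by
      rw [Int.squarefree_natAbs]
      exact fun hsq => absurd (hsq 2 (Dvd.intro _ rfl)) (by decide)
    simp [quadraticFactor, quadraticDiscr, discrFactor, hD4, hdvd,
      ArithmeticFunction.moebius_eq_zero_of_not_squarefree hsq]
  have hdvd := dvd_natCast_iff_of_squarefree hD (n := h)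
  rw [quadraticDiscr, if_pos hD4, discrFactor]
  split_ifs with hDh
  · rw [mul_one]
    simp only [quadraticFactor, coprimeWeight]
    congr 2
    exact prod_congr rfl fun l hl => by simp only [if_pos (hdvd.1 hDh l hl)]
  · obtain ⟨l, hl, hlh⟩ : ∃ l ∈ D.natAbs.primeFactors, ¬ l ∣ h := by
      simpa only [not_forall, exists_prop] using mt hdvd.2 hDh
    have hzero : quadraticFactor (coprimeWeight h 0) D = 0 := by
      rw [quadraticFactor, if_pos hD4]
      exact prod_eq_zero hl (by simp [coprimeWeight, hlh])
    rw [hzero, sub_zero, one_mul, quadraticFactor_coprimeWeight_inv h hD hD4]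

theorem nonresidueMean_coprimeWeight_inv {h : ℕ} (hh : Odd h) {D : ℤ} (hD : Squarefree D) :
    nonresidueMean (coprimeWeight h fun l => (l : ℝ)⁻¹) D =
      (∏' p : Nat.Primes, if (p : ℕ) ∣ h then (1 : ℝ) else
          1 - 1 / (((p : ℕ) : ℝ) * (((p : ℕ) : ℝ) - 1))) * discrFactor h (quadraticDiscr D) *
        nonresidueMean (coprimeWeight h 0) D := by
  rw [nonresidueMean, nonresidueMean, tprod_coprimeWeight_inv hh.pos.ne',
    one_sub_quadraticFactor_coprimeWeight_inv hh hD]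
  ring

lemma nonresidueMean_coprimeWeight_zero_ne_zero {h : ℕ} (hh : Odd h) {D : ℤ} (hD : D ≠ 1) :
    nonresidueMean (coprimeWeight h 0) D ≠ 0 := by
  refine mul_ne_zero (mul_ne_zero (by norm_num) (tprod_coprimeWeight_zero_ne_zero hh)) ?_
  exact sub_ne_zero.2 (quadraticFactor_ne_one (isLocalWeight_zero.coprimeWeight hh.pos.ne') hD).symm

end CoprimeWeight

section Ratio

open Finset

theorem IsLocalWeight.tendsto_sum_nonresidue_div {c c' : ℕ → ℝ} (hc : IsLocalWeight c)
    (hc' : IsLocalWeight c') {D m : ℤ} (hD : Squarefree D) (hm : m ≠ 0)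
    (hmean : nonresidueMean c' D ≠ 0) {f : ℕ → ℝ} (hf : IsRegularWeight f) :
    Tendsto (fun N : ℕ =>
      (∑ p ∈ N.primesLE, (if jacobiSym (D * m ^ 2) p = -1 then
          ∏ l ∈ (p - 1).primeFactors, (1 - c l) else 0) * (Real.log p * f p)) /
        ∑ p ∈ N.primesLE, (if jacobiSym (D * m ^ 2) p = -1 then
          ∏ l ∈ (p - 1).primeFactors, (1 - c' l) else 0) * (Real.log p * f p)) atTop
      (nhds (nonresidueMean c D / nonresidueMean c' D)) := by
  refine ((hc.tendsto_sum_nonresidue hD hm hf).div (hc'.tendsto_sum_nonresidue hD hm hf)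
    hmean).congr' ?_
  filter_upwards [hf.tendsto_sum_atTop.eventually_ne_atTop 0] with N hN
  exact div_div_div_cancel_right₀ hN _ _

lemma sum_nth_prime {M : Type*} [AddCommMonoid M] (F : ℕ → M) (N : ℕ) :
    ∑ i ∈ range N, F (Nat.nth Nat.Prime i) = ∑ p ∈ (Nat.nth Nat.Prime N - 1).primesLE, F p := by
  rw [← Nat.primesBelow_eq_primesLE_sub_one]
  induction N with
  | zero => simp
  | succ N ih =>
    rw [sum_range_succ, ih, Nat.primesBelow_eq_filter_range, Nat.primesBelow_eq_filter_range,
      Nat.filter_range_nth_eq_insert_of_infinite Nat.infinite_setOfPred_prime,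
      sum_insert (by simp), add_comm]

lemma nonresidue_totient_eq (g : ℤ) (h k : ℕ) {p : ℕ} (hp : 1 < p) :
    (if jacobiSym g p = -1 then
        ∏ l ∈ (p - 1).primeFactors, (1 - coprimeWeight h (fun l => (l : ℝ)⁻¹) l) else 0) *
      (Real.log p * powWeight k p) =
      if jacobiSym g p = -1 ∧ (p - 1).gcd h = 1 then (p : ℝ) ^ k * (p - 1).totient else 0 := by
  rw [log_mul_powWeight k hp, prod_one_sub_coprimeWeight h _ (Nat.sub_ne_zero_of_lt hp),
    cast_totient, Nat.cast_pred (by omega), ite_and, ite_mul, ite_mul, zero_mul]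
  congr! 2
  ring

lemma nonresidue_sub_one_eq (g : ℤ) (h k : ℕ) {p : ℕ} (hp : 1 < p) :
    (if jacobiSym g p = -1 then
        ∏ l ∈ (p - 1).primeFactors, (1 - coprimeWeight h 0 l) else 0) *
      (Real.log p * powWeight k p) =
      if jacobiSym g p = -1 ∧ (p - 1).gcd h = 1 then (p : ℝ) ^ k * ((p : ℝ) - 1) else 0 := by
  rw [log_mul_powWeight k hp, prod_one_sub_coprimeWeight h _ (Nat.sub_ne_zero_of_lt hp),
    ite_and, ite_mul, ite_mul, zero_mul]
  simp

lemma tendsto_nth_prime_sub_one : Tendsto (fun N => Nat.nth Nat.Prime N - 1) atTop atTop :=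
  tendsto_atTop_mono (fun N => Nat.le_sub_of_add_le (Nat.le_of_lt (Nat.add_two_le_nth_prime N)))
    tendsto_id

end Ratio

end ArtinRatio

open ArtinRatio in
theorem artin_ratio_formula_power_general (g : ℤ) (hsq : ¬ IsSquare g) (h : ℕ) (hodd : Odd h)
    (g₁ : ℤ) (hg₁ : Squarefree g₁) (hker : ∃ m : ℤ, g = g₁ * m ^ 2)
    (d : ℤ) (hd : d = if g₁ % 4 = 1 then g₁ else 4 * g₁)
    (k : ℕ) :
    Tendsto (fun N : ℕ =>
        (∑ i ∈ (Finset.range N).filter (fun i =>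
            @legendreSym (Nat.nth Nat.Prime i) ⟨Nat.prime_nth_prime i⟩ g = -1 ∧
            Nat.gcd (Nat.nth Nat.Prime i - 1) h = 1),
          (Nat.nth Nat.Prime i : ℝ) ^ k * ((Nat.nth Nat.Prime i - 1).totient : ℝ)) /
        (∑ i ∈ (Finset.range N).filter (fun i =>
            @legendreSym (Nat.nth Nat.Prime i) ⟨Nat.prime_nth_prime i⟩ g = -1 ∧
            Nat.gcd (Nat.nth Nat.Prime i - 1) h = 1),
          (Nat.nth Nat.Prime i : ℝ) ^ k * ((Nat.nth Nat.Prime i : ℝ) - 1)))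
      atTop
      (nhds (
        (∏' p : Nat.Primes, if (p : ℕ) ∣ h then (1 : ℝ) else
            1 - 1 / (((p : ℕ) : ℝ) * (((p : ℕ) : ℝ) - 1))) *
        (if d ∣ (h : ℤ) then (1 : ℝ) else
          1 - (ArithmeticFunction.moebius d.natAbs : ℝ) *
            (∏ q ∈ d.natAbs.primeFactors.filter (fun q => q ∣ h), (1 / ((q : ℝ) - 2))) *
            (∏ q ∈ d.natAbs.primeFactors.filter (fun q => ¬ q ∣ h),
              (1 / ((q : ℝ) ^ 2 - q - 1)))))) := by
  obtain ⟨m, rfl⟩ := hker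
  have hg₁1 : g₁ ≠ 1 := by
    rintro rfl
    exact hsq ⟨m, by ring⟩
  have hm : m ≠ 0 := by
    rintro rfl
    exact hsq ⟨0, by ring⟩
  have hmean := nonresidueMean_coprimeWeight_zero_ne_zero hodd hg₁1
  have hlim := ((isLocalWeight_inv.coprimeWeight hodd.pos.ne').tendsto_sum_nonresidue_div
    (isLocalWeight_zero.coprimeWeight hodd.pos.ne') hg₁ hm hmean
    (isRegularWeight_powWeight k)).comp tendsto_nth_prime_sub_one
  rw [nonresidueMean_coprimeWeight_inv hodd hg₁, mul_div_cancel_right₀ _ hmean] at hlim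
  subst hd
  refine hlim.congr fun N => ?_
  simp only [Function.comp_def, ← sum_nth_prime, nonresidue_totient_eq, nonresidue_sub_one_eq,
    (Nat.prime_nth_prime _).one_lt, Finset.sum_filter, jacobiSym.legendreSym.to_jacobiSym]

/-- For `g` not a perfect square, written as `g = g₀^h` with `h` maximal and `h > 1`,
with `d` the discriminant of `ℚ(√g)`, and any `k ≥ 0`, the ratio
`(∑' p^k φ(p-1)) / (∑' p^k (p-1))` over the primes `p` among the first `N` primes
with `(g/p) = -1` and `gcd(p-1, h) = 1` tends to `Ã(g) = Ã_h · Ã_d`. -/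
theorem artin_ratio_formula_power (g : ℤ) (hg : 1 < |g|) (hsq : ¬ IsSquare g)
    (g₀ : ℤ) (h : ℕ) (hgh : g = g₀ ^ h)
    (hmax : ∀ (b : ℤ) (m : ℕ), g = b ^ m → m ≤ h) (hh : 1 < h)
    (g₁ : ℤ) (hg₁ : Squarefree g₁) (hker : ∃ m : ℤ, g = g₁ * m ^ 2)
    (d : ℤ) (hd : d = if g₁ % 4 = 1 then g₁ else 4 * g₁)
    (k : ℕ) :
    Tendsto (fun N : ℕ =>
        (∑ i ∈ (Finset.range N).filter (fun i =>
            @legendreSym (Nat.nth Nat.Prime i) ⟨Nat.prime_nth_prime i⟩ g = -1 ∧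
            Nat.gcd (Nat.nth Nat.Prime i - 1) h = 1),
          (Nat.nth Nat.Prime i : ℝ) ^ k * ((Nat.nth Nat.Prime i - 1).totient : ℝ)) /
        (∑ i ∈ (Finset.range N).filter (fun i =>
            @legendreSym (Nat.nth Nat.Prime i) ⟨Nat.prime_nth_prime i⟩ g = -1 ∧
            Nat.gcd (Nat.nth Nat.Prime i - 1) h = 1),
          (Nat.nth Nat.Prime i : ℝ) ^ k * ((Nat.nth Nat.Prime i : ℝ) - 1)))
      atTop
      (nhds (
        -- Ã_h : the product over primes not dividing h
        (∏' p : Nat.Primes, if (p : ℕ) ∣ h then (1 : ℝ) else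
            1 - 1 / (((p : ℕ) : ℝ) * (((p : ℕ) : ℝ) - 1))) *
        -- Ã_d
        (if d ∣ (h : ℤ) then (1 : ℝ) else
          1 - (ArithmeticFunction.moebius d.natAbs : ℝ) *
            (∏ q ∈ d.natAbs.primeFactors.filter (fun q => q ∣ h), (1 / ((q : ℝ) - 2))) *
            (∏ q ∈ d.natAbs.primeFactors.filter (fun q => ¬ q ∣ h),
              (1 / ((q : ℝ) ^ 2 - q - 1)))))) := by
  have hodd : Odd h := Nat.not_even_iff_odd.1 fun heven => hsq (hgh ▸ heven.isSquare_pow g₀)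
  exact artin_ratio_formula_power_general g hsq h hodd g₁ hg₁ hker d hd k
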